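/- arXiv:2106.03726 — 5 statements merged into one kernel-verified Lean document; each statement's English description precedes it below -/
import Mathlib

section
/- Let d ≥ 3 and let q_1, …, q_d be pairwise coprime positive integers. If a Γ-periodic potential V : ℤ^d → ℝ and the zero potential are Fermi isospectral, then V is identically zero. -/
open scoped BigOperators
open Complex

noncomputable section

/-- The fundamental domain `W` for `Γ = q₁ℤ ⊕ ⋯ ⊕ q_dℤ`, as a type. -/
abbrev Cell (d : ℕ) (q : Fin d → ℕ) := (j : Fin d) → Fin (q j)

/-- `V : ℤ^d → ℝ` is `Γ`-periodic for `Γ = q₁ℤ ⊕ ⋯ ⊕ q_dℤ`. -/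
def IsPeriodicPotential (d : ℕ) (q : Fin d → ℕ) (V : (Fin d → ℤ) → ℝ) : Prop :=
  ∀ n γ : Fin d → ℤ, (∀ j, (q j : ℤ) ∣ γ j) → V (n + γ) = V n

/-- The discrete Fourier transform `V̂(l)`, defined for all `l ∈ ℤ^d`
(it is automatically `Γ`-periodic in `l`). -/
def dft (d : ℕ) (q : Fin d → ℕ) (V : (Fin d → ℤ) → ℝ) (l : Fin d → ℤ) : ℂ :=
  (1 / ∏ j, (q j : ℂ)) *
    ∑ n : Cell d q, (V (fun j => ((n j : ℕ) : ℤ)) : ℂ) *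
      Complex.exp (-(2 * Real.pi * Complex.I) * ∑ j, (l j : ℂ) * ((n j : ℕ) : ℂ) / (q j : ℂ))

/-- `ρ^j_m = e^{2πi m/q_j}`. -/
def rho (d : ℕ) (q : Fin d → ℕ) (j : Fin d) (m : ℤ) : ℂ :=
  Complex.exp (2 * Real.pi * Complex.I * (m : ℂ) / (q j : ℂ))

/-- The Floquet matrix `M_V(z)` (the matrix `A + B_V` of Lemma 2.7). -/
def floquetMatrix (d : ℕ) (q : Fin d → ℕ) (V : (Fin d → ℤ) → ℝ) (z : Fin d → ℂ) :
    Matrix (Cell d q) (Cell d q) ℂ := fun n n' =>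
  (if n = n' then ∑ j, (rho d q j (n j : ℕ) * z j + (rho d q j (n j : ℕ) * z j)⁻¹) else 0)
    + dft d q V (fun j => ((n j : ℕ) : ℤ) - ((n' j : ℕ) : ℤ))

/-- `P̃_V(z, λ) = det (M_V(z) − λ I)`. -/
def floquetDet (d : ℕ) (q : Fin d → ℕ) (V : (Fin d → ℤ) → ℝ) (z : Fin d → ℂ) (lam : ℂ) : ℂ :=
  Matrix.det (floquetMatrix d q V z - lam • (1 : Matrix (Cell d q) (Cell d q) ℂ))

/-- `V` and `Y` are Fermi isospectral. -/
def FermiIsospectral (d : ℕ) (q : Fin d → ℕ) (V Y : (Fin d → ℤ) → ℝ) : Prop :=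
  ∃ lam0 : ℂ,
    {z : Fin d → ℂ | (∀ j, z j ≠ 0) ∧ floquetDet d q V z lam0 = 0}
      = {z : Fin d → ℂ | (∀ j, z j ≠ 0) ∧ floquetDet d q Y z lam0 = 0}

/-- `V` and `Y` are Floquet isospectral. -/
def FloquetIsospectral (d : ℕ) (q : Fin d → ℕ) (V Y : (Fin d → ℤ) → ℝ) : Prop :=
  ∀ z : Fin d → ℂ, (∀ j, z j ≠ 0) → ∀ lam : ℂ,
    floquetDet d q V z lam = floquetDet d q Y z lam

/-- The average `[V]` of `V` over one periodicity cell. -/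
def potentialAvg (d : ℕ) (q : Fin d → ℕ) (V : (Fin d → ℤ) → ℝ) : ℝ :=
  (1 / ∏ j, (q j : ℝ)) * ∑ n : Cell d q, V (fun j => ((n j : ℕ) : ℤ))

/-- The embedding of the `j`-th block of coordinates into `Fin d`,
given block sizes `D : Fin r → ℕ` with `∑ j, D j = d`. -/
def blockEmbed {r d : ℕ} (D : Fin r → ℕ) (hsum : ∑ j, D j = d) (j : Fin r) (i : Fin (D j)) :
    Fin d :=
  ⟨(∑ k ∈ Finset.univ.filter (fun k => k < j), D k) + i.1, by
    have hj : j ∉ Finset.univ.filter (fun k => k < j) := by simp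
    have h2 : (∑ k ∈ Finset.univ.filter (fun k => k < j), D k) + D j ≤ ∑ k, D k := by
      calc (∑ k ∈ Finset.univ.filter (fun k => k < j), D k) + D j
          = ∑ k ∈ insert j (Finset.univ.filter (fun k => k < j)), D k := by
            rw [Finset.sum_insert hj, add_comm]
        _ ≤ ∑ k, D k := Finset.sum_le_sum_of_subset (Finset.subset_univ _)
    have h3 := i.2
    omega⟩

/-- `V` is `(D 0, …, D (r-1))` separable. -/
def IsSeparablePotential {r : ℕ} (d : ℕ) (D : Fin r → ℕ) (hsum : ∑ j, D j = d)
    (V : (Fin d → ℤ) → ℝ) : Prop :=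
  ∃ Vj : (j : Fin r) → (Fin (D j) → ℤ) → ℝ,
    ∀ n : Fin d → ℤ, V n = ∑ j, Vj j (fun i => n (blockEmbed D hsum j i))

/-!
Let `B = (V̂(n - n'))`. On the free Fermi surface `∑ j, (z j + 1 / z j) = λ` the diagonal entry of
`M_V(z) - λ` at the index `0` is `V̂(0)`, and along `z ≈ t a` with `∑ j, a j = 0` the other diagonal
entries grow like `t (ρ_m ⬝ a)`. Eliminating the other indices by a Schur complement, `det = 0`
becomes, as `t → ∞`, `V̂(0) = 0` and `∑_{m ≠ 0} |V̂(m)|² / (ρ_m ⬝ a) = 0` for all `a` generic in the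
hyperplane `∑ j, a j = 0`.

Only the `m` with `ρ_m ∈ span {1, ρ_o}` contribute to the part of this sum that is singular where
`ρ_o ⬝ a = 0`, so the sum over these `m` alone vanishes. The orders of the coordinates of `ρ_m` are
pairwise coprime, so coinciding coordinates equal `1`. If two coordinates of `ρ_o` differ from `1`,
then, as `d ≥ 3`, `ρ_o` has three distinct coordinates on the unit circle, an affine map carrying
them to the unit circle is a rotation, and `m = o` is the only term. Otherwise every `ρ_m` involved
differs from `1` in the same single coordinate `x_m`, the sum is a multiple of
`∑ |V̂(m)|² / (x_m - 1)`, and `Re (1 / (x - 1)) = -1 / 2` on the unit circle makes each term vanish.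
-/

section SchurComplement

open Filter Topology Bornology Matrix

variable {ι : Type*} [DecidableEq ι]

lemma apply_self_eq_dotProduct_inv_mulVec_of_det_eq_zero [Fintype ι] {R : Type*} [CommRing R]
    {M : Matrix ι ι R} {o : ι} (hM : M.det = 0)
    (hunit : IsUnit (M.toSquareBlockProp (· ≠ o)).det) :
    M o o = (fun j : {j // j ≠ o} => M o j) ⬝ᵥ
      (M.toSquareBlockProp (· ≠ o))⁻¹ *ᵥ fun j : {j // j ≠ o} => M j o := by
  have := Matrix.invertibleOfIsUnitDet _ hunit
  have h : (fromBlocks (M.toBlock (· = o) (· = o)) (M.toBlock (· = o) (· ≠ o))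
      (M.toBlock (· ≠ o) (· = o)) (M.toSquareBlockProp (· ≠ o))).det = 0 := by
    rw [det_toBlock M (· = o)] at hM
    convert hM
    rfl
  rw [det_fromBlocks₂₂, hunit.mul_right_eq_zero, det_unique, invOf_eq_nonsing_inv,
    Matrix.mul_assoc] at h
  exact sub_eq_zero.1 h

lemma apply_self_eq_dotProduct_inv_mulVec_of_det_diagonal_add_eq_zero [Fintype ι] {R : Type*}
    [CommRing R] {D : ι → R} {B : Matrix ι ι R} {o : ι} (hdet : (diagonal D + B).det = 0)
    (hDo : D o = 0)
    (hunit : IsUnit (diagonal (fun m : {m // m ≠ o} => D m) + B.toSquareBlockProp (· ≠ o)).det) :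
    B o o = (fun m : {m // m ≠ o} => B o m) ⬝ᵥ
      (diagonal (fun m : {m // m ≠ o} => D m) + B.toSquareBlockProp (· ≠ o))⁻¹ *ᵥ
        fun m : {m // m ≠ o} => B m o := by
  have hblock : (diagonal D + B).toSquareBlockProp (· ≠ o) =
      diagonal (fun m : {m // m ≠ o} => D m) + B.toSquareBlockProp (· ≠ o) := by
    ext i j
    simp [toSquareBlockProp, diagonal_apply, Subtype.ext_iff]
  have h := apply_self_eq_dotProduct_inv_mulVec_of_det_eq_zero hdet (hblock ▸ hunit)
  have hrow (m : {m // m ≠ o}) : (diagonal D + B) o m = B o m := by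
    rw [Matrix.add_apply, diagonal_apply_ne _ m.2.symm, zero_add]
  have hcol (m : {m // m ≠ o}) : (diagonal D + B) m o = B m o := by
    rw [Matrix.add_apply, diagonal_apply_ne _ m.2, zero_add]
  simpa only [hblock, hrow, hcol, Matrix.add_apply, diagonal_apply_eq, hDo, zero_add] using h

variable {α 𝕜 : Type*} [NormedField 𝕜] {l : Filter α} {t : α → 𝕜}

lemma tendsto_inv_smul_diagonal_add (ht : Tendsto t l (cobounded 𝕜)) {D : α → ι → 𝕜} {r : ι → 𝕜}
    (hD : ∀ m, Tendsto (fun x => D x m / t x) l (𝓝 (r m))) (B : Matrix ι ι 𝕜) :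
    Tendsto (fun x => (t x)⁻¹ • (diagonal (D x) + B)) l (𝓝 (diagonal r)) := by
  have hdiag : Tendsto (fun x => diagonal fun m => D x m / t x) l (𝓝 (diagonal r)) :=
    (Continuous.matrix_diagonal continuous_id).continuousAt.tendsto.comp (tendsto_pi_nhds.2 hD)
  have hB : Tendsto (fun x => (t x)⁻¹ • B) l (𝓝 0) := by
    simpa only [zero_smul] using! (tendsto_inv₀_cobounded.comp ht).smul_const B
  convert hdiag.add hB using 2 with x
  · rw [smul_add, ← diagonal_smul]
    congr 2
    ext m
    simp only [Pi.smul_apply, smul_eq_mul, div_eq_inv_mul]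
  · rw [add_zero]

lemma eventually_isUnit_det_diagonal_add [Fintype ι] (ht : Tendsto t l (cobounded 𝕜))
    {D : α → ι → 𝕜} {r : ι → 𝕜} (hD : ∀ m, Tendsto (fun x => D x m / t x) l (𝓝 (r m)))
    (hr : ∀ m, r m ≠ 0) (B : Matrix ι ι 𝕜) : ∀ᶠ x in l, IsUnit (diagonal (D x) + B).det := by
  have hne : (diagonal r).det ≠ 0 := by
    simpa only [det_diagonal, Finset.prod_ne_zero_iff] using fun m _ => hr m
  have hlim := continuous_id.matrix_det.continuousAt.tendsto.comp
    (tendsto_inv_smul_diagonal_add ht hD B)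
  filter_upwards [hlim.eventually_ne hne] with x hx
  rw [Function.comp_apply, id, det_smul] at hx
  exact (right_ne_zero_of_mul hx).isUnit

lemma tendsto_smul_inv_diagonal_add [Fintype ι] (ht : Tendsto t l (cobounded 𝕜))
    {D : α → ι → 𝕜} {r : ι → 𝕜} (hD : ∀ m, Tendsto (fun x => D x m / t x) l (𝓝 (r m)))
    (hr : ∀ m, r m ≠ 0) (B : Matrix ι ι 𝕜) :
    Tendsto (fun x => t x • (diagonal (D x) + B)⁻¹) l (𝓝 (diagonal r⁻¹)) := by
  have hdet : (diagonal r).det ≠ 0 := by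
    simpa only [det_diagonal, Finset.prod_ne_zero_iff] using fun m _ => hr m
  have hinv : (diagonal r)⁻¹ = diagonal r⁻¹ := by
    refine inv_eq_right_inv ?_
    simp only [diagonal_mul_diagonal, Pi.inv_apply, mul_inv_cancel₀ (hr _), diagonal_one]
  have hcont : ContinuousAt (Inv.inv : Matrix ι ι 𝕜 → Matrix ι ι 𝕜) (diagonal r) :=
    continuousAt_matrix_inv _ (by simpa only [Ring.inverse_eq_inv'] using continuousAt_inv₀ hdet)
  rw [← hinv]
  refine (hcont.tendsto.comp (tendsto_inv_smul_diagonal_add ht hD B)).congr' ?_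
  filter_upwards [ht.eventually (eventually_ne_cobounded 0),
    eventually_isUnit_det_diagonal_add ht hD hr B] with x hx hunit
  exact (Matrix.inv_smul' _ (Units.mk0 (t x) hx)⁻¹ hunit).trans (by rw [inv_inv]; rfl)

lemma apply_self_eq_zero_and_sum_div_eq_zero [Fintype ι] [l.NeBot]
    (ht : Tendsto t l (cobounded 𝕜)) {D : α → ι → 𝕜} {B : Matrix ι ι 𝕜} {r : ι → 𝕜} {o : ι}
    (hdet : ∀ᶠ x in l, (diagonal (D x) + B).det = 0) (hDo : ∀ᶠ x in l, D x o = 0)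
    (hD : ∀ m, Tendsto (fun x => D x m / t x) l (𝓝 (r m))) (hr : ∀ m ≠ o, r m ≠ 0) :
    B o o = 0 ∧ ∑ m : {m // m ≠ o}, B o m * B m o / r m = 0 := by
  have hD' (m : {m // m ≠ o}) := hD m
  have hr' (m : {m // m ≠ o}) := hr m m.2
  have hlim : Tendsto (fun x => t x * B o o) l (𝓝 (∑ m : {m // m ≠ o}, B o m * B m o / r m)) := by
    have hinv := tendsto_smul_inv_diagonal_add ht hD' hr' (B.toSquareBlockProp (· ≠ o))
    have hcont : Continuous fun A : Matrix {m // m ≠ o} {m // m ≠ o} 𝕜 =>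
        (fun m : {m // m ≠ o} => B o m) ⬝ᵥ A *ᵥ fun m : {m // m ≠ o} => B m o :=
      continuous_const.dotProduct (continuous_id.matrix_mulVec continuous_const)
    convert! (hcont.tendsto _).comp hinv |>.congr' ?_ using 2
    · simp only [dotProduct, mulVec_diagonal, Pi.inv_apply]
      exact Finset.sum_congr rfl fun m _ => by ring
    · filter_upwards [hdet, hDo, eventually_isUnit_det_diagonal_add ht hD' hr' _] with x hx hxo hu
      rw [apply_self_eq_dotProduct_inv_mulVec_of_det_diagonal_add_eq_zero hx hxo hu,
        Function.comp_apply, smul_mulVec, dotProduct_smul, smul_eq_mul]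
  have hBo : B o o = 0 := by
    have h := (tendsto_inv₀_cobounded.comp ht).mul hlim
    rw [zero_mul] at h
    refine tendsto_nhds_unique (tendsto_const_nhds.congr' ?_) h
    filter_upwards [ht.eventually (eventually_ne_cobounded 0)] with x hx
    exact (inv_mul_cancel_left₀ hx _).symm
  refine ⟨hBo, tendsto_nhds_unique hlim ?_⟩
  simp only [hBo, mul_zero, tendsto_const_nhds]

end SchurComplement

section FreeEnergy

open Filter Topology Bornology Matrix

lemma exists_one_le_norm_add_inv_eq (e : ℂ) : ∃ x : ℂ, 1 ≤ ‖x‖ ∧ x + x⁻¹ = e := by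
  obtain ⟨w, hw⟩ := Complex.cos_surjective (e / 2)
  have hsum : exp (w * I) + (exp (w * I))⁻¹ = e := by
    rw [← exp_neg, ← neg_mul, ← two_cos, hw]
    ring
  rcases le_total 1 ‖exp (w * I)‖ with h | h
  · exact ⟨_, h, hsum⟩
  · refine ⟨(exp (w * I))⁻¹, ?_, by rw [inv_inv, add_comm, hsum]⟩
    rw [norm_inv]
    exact (one_le_inv₀ (norm_pos_iff.2 (exp_ne_zero _))).2 h

variable {J : Type*} [Fintype J]

/-- The symbol `∑ j, (z j + 1 / z j)` of the discrete Laplacian at the Floquet multiplier `z`. The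
diagonal entries of the Floquet matrix are its values at `z` twisted by characters. -/
def freeEnergy (z : J → ℂ) : ℂ := ∑ j, (z j + (z j)⁻¹)

lemma tendsto_freeEnergy_mul_div (w : J → ℂ) {z : ℂ → J → ℂ} {a : J → ℂ}
    (hz : ∀ t j, 1 ≤ ‖z t j‖) (ha : ∀ j, Tendsto (fun t => z t j / t) (cobounded ℂ) (𝓝 (a j))) :
    Tendsto (fun t => freeEnergy (w * z t) / t) (cobounded ℂ) (𝓝 (w ⬝ᵥ a)) := by
  have hinv (j : J) : Tendsto (fun t => t⁻¹ * (w j * z t j)⁻¹) (cobounded ℂ) (𝓝 0) := by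
    refine tendsto_inv₀_cobounded.zero_mul_isBoundedUnder_le
      (isBoundedUnder_of ⟨‖w j‖⁻¹, fun t => ?_⟩)
    rw [Function.comp_apply, norm_inv, norm_mul, mul_inv]
    exact mul_le_of_le_one_right (by positivity) (inv_le_one_of_one_le₀ (hz t j))
  have hsum := tendsto_finsetSum Finset.univ fun j _ => ((ha j).const_mul (w j)).add (hinv j)
  simp only [add_zero] at hsum
  refine hsum.congr fun t => ?_
  rw [freeEnergy, Finset.sum_div]
  exact Finset.sum_congr rfl fun j _ => by rw [Pi.mul_apply]; ring

lemma exists_freeEnergy_eq_tendsto_div [Nonempty J] (lam : ℂ) {a : J → ℂ} (ha : ∑ j, a j = 0) :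
    ∃ z : ℂ → J → ℂ, (∀ t j, 1 ≤ ‖z t j‖) ∧ (∀ t, freeEnergy (z t) = lam) ∧
      ∀ j, Tendsto (fun t => z t j / t) (cobounded ℂ) (𝓝 (a j)) := by
  -- Solving `z j + 1 / z j = t * a j + lam / |J|` in each coordinate stays on the surface exactly.
  choose x hx hsum using exists_one_le_norm_add_inv_eq
  refine ⟨fun t j => x (t * a j + lam / Fintype.card J), fun t j => hx _, fun t => ?_, fun j => ?_⟩
  · simp only [freeEnergy, hsum, Finset.sum_add_distrib, ← Finset.mul_sum, ha, mul_zero, zero_add,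
      Finset.sum_const, Finset.card_univ, nsmul_eq_mul]
    exact mul_div_cancel₀ _ (Nat.cast_ne_zero.2 Fintype.card_ne_zero)
  · set c := lam / Fintype.card J
    have hbdd : Tendsto (fun t => t⁻¹ * (c - (x (t * a j + c))⁻¹)) (cobounded ℂ) (𝓝 0) := by
      refine tendsto_inv₀_cobounded.zero_mul_isBoundedUnder_le
        (isBoundedUnder_of ⟨‖c‖ + 1, fun t => (norm_sub_le _ _).trans ?_⟩)
      rw [norm_inv]
      gcongr
      exact inv_le_one_of_one_le₀ (hx _)
    have hlim := hbdd.const_add (a j)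
    rw [add_zero] at hlim
    refine hlim.congr' ?_
    filter_upwards [eventually_ne_cobounded 0] with t ht
    rw [eq_div_iff ht]
    linear_combination (c - (x (t * a j + c))⁻¹) * inv_mul_cancel₀ ht - hsum (t * a j + c)

lemma apply_self_eq_zero_and_sum_div_dotProduct_eq_zero [Nonempty J] {ι : Type*} [Fintype ι]
    [DecidableEq ι] {w : ι → J → ℂ} {o : ι} (ho : w o = 1) {B : Matrix ι ι ℂ} {lam : ℂ}
    (hdet : ∀ z : J → ℂ, (∀ j, z j ≠ 0) → freeEnergy z = lam →
      (diagonal (fun m => freeEnergy (w m * z) - lam) + B).det = 0)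
    {a : J → ℂ} (hsum : ∑ j, a j = 0) (ha : ∀ m ≠ o, w m ⬝ᵥ a ≠ 0) :
    B o o = 0 ∧ ∑ m : {m // m ≠ o}, B o m * B m o / (w m ⬝ᵥ a) = 0 := by
  obtain ⟨z, hz, hlam, hza⟩ := exists_freeEnergy_eq_tendsto_div lam hsum
  refine apply_self_eq_zero_and_sum_div_eq_zero (r := fun m => w m ⬝ᵥ a) tendsto_id
    (.of_forall fun t => hdet (z t) (fun j => ?_) (hlam t)) (.of_forall fun t => ?_)
    (fun m => ?_) ha
  · exact norm_pos_iff.1 (one_pos.trans_le (hz t j))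
  · rw [ho, one_mul, hlam, sub_self]
  · have hconst := tendsto_inv₀_cobounded (α := ℂ).const_mul lam
    rw [mul_zero] at hconst
    have h := (tendsto_freeEnergy_mul_div (w m) hz hza).sub hconst
    rw [sub_zero] at h
    exact h.congr fun t => by simp only [id, div_eq_mul_inv, sub_mul]

end FreeEnergy

section GenericDirection

open Matrix

variable {ι J 𝕜 : Type*} [Finite ι] [Fintype J]

lemma exists_dotProduct_eq_zero_forall_dotProduct_ne_zero [Field 𝕜] [Infinite 𝕜]
    (P : Submodule 𝕜 (J → 𝕜)) (w : ι → J → 𝕜) :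
    ∃ a : J → 𝕜, (∀ p ∈ P, p ⬝ᵥ a = 0) ∧ ∀ m, w m ∉ P → w m ⬝ᵥ a ≠ 0 := by
  classical
  obtain ⟨f, hfP, hf⟩ := Module.Dual.exists_forall_mem_ne_zero_of_forall_exists P.dualAnnihilator
    (fun m : {m // w m ∉ P} => Module.Dual.eval 𝕜 (J → 𝕜) (w m)) fun m => by
      obtain ⟨f, hfm, hPf⟩ := Submodule.exists_le_ker_of_notMem m.2
      exact ⟨f, (Submodule.mem_dualAnnihilator f).2 fun p hp => LinearMap.mem_ker.1 (hPf hp), hfm⟩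
  have hdot (v : J → 𝕜) : v ⬝ᵥ (dotProductEquiv 𝕜 J).symm f = f v := by
    rw [dotProduct_comm]
    exact LinearMap.congr_fun ((dotProductEquiv 𝕜 J).apply_symm_apply f) v
  refine ⟨(dotProductEquiv 𝕜 J).symm f, fun p hp => ?_, fun m hm => ?_⟩
  · exact (hdot p).trans ((Submodule.mem_dualAnnihilator f).1 hfP p hp)
  · exact (hdot _).trans_ne (hf ⟨m, hm⟩)

end GenericDirection

section PartialFractions

open Filter Topology Bornology Matrix

variable {ι J 𝕜 : Type*} [Fintype ι] [Fintype J] [NontriviallyNormedField 𝕜]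

lemma tendsto_add_mul_const_cobounded (x : 𝕜) {y : 𝕜} (hy : y ≠ 0) :
    Tendsto (fun t => x + t * y) (cobounded 𝕜) (cobounded 𝕜) :=
  (tendsto_const_add_cobounded x).comp (tendsto_mul_right_cobounded hy)

open Classical in
lemma tendsto_sum_div_add_mul (c x y : ι → 𝕜) :
    Tendsto (fun t => ∑ i, c i / (x i + t * y i)) (cobounded 𝕜)
      (𝓝 (∑ i with y i = 0, c i / x i)) := by
  rw [Finset.sum_filter]
  refine tendsto_finsetSum _ fun i _ => ?_
  split_ifs with hy
  · simp only [hy, mul_zero, add_zero, tendsto_const_nhds]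
  · simpa only [div_eq_mul_inv, mul_zero, Function.comp_def] using
      (tendsto_inv₀_cobounded.comp (tendsto_add_mul_const_cobounded (x i) hy)).const_mul (c i)

open Classical in
lemma sum_filter_mem_div_dotProduct_eq_zero {w : ι → J → 𝕜} {c : ι → 𝕜}
    {P P' : Submodule 𝕜 (J → 𝕜)} (hle : P ≤ P')
    (h : ∀ a : J → 𝕜, (∀ p ∈ P, p ⬝ᵥ a = 0) → (∀ m, w m ⬝ᵥ a ≠ 0) → ∑ m, c m / (w m ⬝ᵥ a) = 0)
    {a : J → 𝕜} (haP : ∀ p ∈ P, p ⬝ᵥ a = 0) (ha : ∀ m, w m ⬝ᵥ a ≠ 0) :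
    ∑ m with w m ∈ P', c m / (w m ⬝ᵥ a) = 0 := by
  -- Move `a` to infinity along some `b` generic in the orthogonal of `P'`: only the terms that are
  -- constant on the line `a + t • b` survive.
  have : Infinite 𝕜 := NontriviallyNormedField.infinite 𝕜
  obtain ⟨b, hbP', hb⟩ := exists_dotProduct_eq_zero_forall_dotProduct_ne_zero P' w
  have hmem (m : ι) : w m ⬝ᵥ b = 0 ↔ w m ∈ P' := ⟨not_imp_not.1 (hb m), hbP' _⟩
  have hne (m : ι) : ∀ᶠ t in cobounded 𝕜, w m ⬝ᵥ a + t * (w m ⬝ᵥ b) ≠ 0 := by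
    by_cases hm : w m ⬝ᵥ b = 0
    · simp only [hm, mul_zero, add_zero, ha m, ne_eq, not_false_eq_true, eventually_true]
    · exact (tendsto_add_mul_const_cobounded _ hm).eventually (eventually_ne_cobounded 0)
  simp only [← hmem]
  refine tendsto_nhds_unique (tendsto_sum_div_add_mul c _ _) (tendsto_const_nhds.congr' ?_)
  have hdot (t : 𝕜) (v : J → 𝕜) : v ⬝ᵥ (a + t • b) = v ⬝ᵥ a + t * (v ⬝ᵥ b) := by
    rw [dotProduct_add, dotProduct_smul, smul_eq_mul]
  filter_upwards [eventually_all.2 hne] with t ht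
  have hline := h (a + t • b)
  simp only [hdot] at hline
  refine (hline (fun p hp => ?_) ht).symm
  rw [haP p hp, hbP' p (hle hp), mul_zero, add_zero]

end PartialFractions

section CoprimeTorsion

open scoped Function

lemma eq_zero_of_norm_add_mul_eq_one {α β x y z : ℂ} (hx : ‖x‖ = 1) (hy : ‖y‖ = 1)
    (hz : ‖z‖ = 1) (hxy : x ≠ y) (hxz : x ≠ z) (hyz : y ≠ z) (hβ : β ≠ 0)
    (hx' : ‖α + β * x‖ = 1) (hy' : ‖α + β * y‖ = 1) (hz' : ‖α + β * z‖ = 1) : α = 0 := by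
  -- The circles of centres `0` and `-α / β` share three points.
  by_contra hα
  have hc : (0 : ℂ) ≠ -(α / β) := (neg_ne_zero.2 (div_ne_zero hα hβ)).symm
  have hdist {w : ℂ} (hw : ‖α + β * w‖ = 1) : dist w (-(α / β)) = ‖β‖⁻¹ := by
    rw [dist_eq, sub_neg_eq_add, ← one_div, ← hw, ← norm_div, add_div, mul_div_cancel_left₀ _ hβ,
      add_comm]
  rcases EuclideanGeometry.eq_of_dist_eq_of_dist_eq_of_finrank_eq_two finrank_real_complex hc hxy
    ((dist_zero_right x).trans hx) ((dist_zero_right y).trans hy) ((dist_zero_right z).trans hz)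
    (hdist hx') (hdist hy') (hdist hz') with h | h
  exacts [hxz h.symm, hyz h.symm]

lemma re_inv_sub_one {x : ℂ} (hx : ‖x‖ = 1) (hx1 : x ≠ 1) : (x - 1)⁻¹.re = -1 / 2 := by
  have hx0 : x ≠ 0 := norm_ne_zero_iff.1 (hx ▸ one_ne_zero)
  have hsub : x - 1 ≠ 0 := sub_ne_zero.2 hx1
  have hsub' : 1 - x ≠ 0 := sub_ne_zero.2 hx1.symm
  have hadd : (x - 1)⁻¹ + (x⁻¹ - 1)⁻¹ = -1 := by
    field_simp
    ring
  rw [← ofReal_inj, re_eq_add_conj, map_inv₀, map_sub, map_one, ← inv_eq_conj hx, hadd]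
  norm_num

lemma eq_zero_of_sum_div_sub_one_eq_zero {ι : Type*} {s : Finset ι} {x : ι → ℂ} {c : ι → ℝ}
    (hx : ∀ m ∈ s, ‖x m‖ = 1) (hx1 : ∀ m ∈ s, x m ≠ 1) (hc : ∀ m ∈ s, 0 ≤ c m)
    (h : ∑ m ∈ s, c m / (x m - 1) = 0) : ∀ m ∈ s, c m = 0 := by
  refine (Finset.sum_eq_zero_iff_of_nonneg hc).1 ?_
  have hre : ∑ m ∈ s, c m * (-1 / 2) = 0 := by
    rw [← zero_re, ← h, re_sum]
    refine Finset.sum_congr rfl fun m hm => ?_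
    rw [div_eq_mul_inv (c m : ℂ), re_ofReal_mul, re_inv_sub_one (hx m hm) (hx1 m hm)]
  rw [← Finset.sum_mul] at hre
  linarith

variable {J : Type*} {q : J → ℕ}

lemma apply_eq_one_of_apply_eq {M : Type*} [Monoid M] (hco : Pairwise (Nat.Coprime on q))
    {u : J → M} (hu : ∀ j, u j ^ q j = 1) {i j : J} (hij : i ≠ j) (h : u i = u j) : u i = 1 :=
  (pow_eq_one_iff_of_coprime (hco hij)).1 ⟨hu i, h ▸ hu j⟩

lemma eq_one_of_mem_span_one [Nontrivial J] {𝕜 : Type*} [Semiring 𝕜]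
    (hco : Pairwise (Nat.Coprime on q)) {u : J → 𝕜} (hu : ∀ j, u j ^ q j = 1)
    (hspan : u ∈ Submodule.span 𝕜 {1}) : u = 1 := by
  obtain ⟨α, rfl⟩ := Submodule.mem_span_singleton.1 hspan
  funext j
  obtain ⟨i, hi⟩ := exists_ne j
  exact apply_eq_one_of_apply_eq hco hu hi.symm rfl

lemma apply_eq_one_of_mem_span_pair {𝕜 : Type*} [Semiring 𝕜]
    (hJ : ∀ i j : J, ∃ k, k ≠ i ∧ k ≠ j) (hco : Pairwise (Nat.Coprime on q)) {u v : J → 𝕜}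
    (hu : ∀ j, u j ^ q j = 1) (hspan : u ∈ Submodule.span 𝕜 {1, v}) {i : J}
    (hv : ∀ j ≠ i, v j = 1) : ∀ j ≠ i, u j = 1 := by
  obtain ⟨α, β, rfl⟩ := Submodule.mem_span_pair.1 hspan
  intro j hj
  obtain ⟨k, hki, hkj⟩ := hJ i j
  refine apply_eq_one_of_apply_eq hco hu hkj.symm ?_
  simp only [Pi.add_apply, Pi.smul_apply, hv j hj, hv k hki, Pi.one_apply]

lemma eq_of_mem_span_pair_of_apply_ne_one (hJ : ∀ i j : J, ∃ k, k ≠ i ∧ k ≠ j)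
    (hq : ∀ j, q j ≠ 0) (hco : Pairwise (Nat.Coprime on q)) {u v : J → ℂ}
    (hu : ∀ j, u j ^ q j = 1) (hv : ∀ j, v j ^ q j = 1) (hu1 : u ≠ 1)
    (hspan : u ∈ Submodule.span ℂ {1, v}) {i j : J} (hij : i ≠ j) (hvi : v i ≠ 1)
    (hvj : v j ≠ 1) : u = v := by
  have : Nontrivial J := ⟨i, j, hij⟩
  obtain ⟨k, hki, hkj⟩ := hJ i j
  obtain ⟨α, β, huv⟩ := Submodule.mem_span_pair.1 hspan
  have happly (l : J) : α + β * v l = u l := by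
    rw [← huv]
    simp only [Pi.add_apply, Pi.smul_apply, Pi.one_apply, smul_eq_mul, mul_one]
  have hunorm (l : J) : ‖α + β * v l‖ = 1 := by
    rw [happly, norm_eq_one_of_pow_eq_one (hu l) (hq l)]
  have hvnorm (l : J) : ‖v l‖ = 1 := norm_eq_one_of_pow_eq_one (hv l) (hq l)
  have hβ : β ≠ 0 := by
    rintro rfl
    refine hu1 (eq_one_of_mem_span_one hco hu (Submodule.mem_span_singleton.2 ⟨α, ?_⟩))
    rw [← huv, zero_smul, add_zero]
  have hα : α = 0 := eq_zero_of_norm_add_mul_eq_one (hvnorm i) (hvnorm j) (hvnorm k)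
    (fun h => hvi (apply_eq_one_of_apply_eq hco hv hij h))
    (fun h => hvi (apply_eq_one_of_apply_eq hco hv hki.symm h))
    (fun h => hvj (apply_eq_one_of_apply_eq hco hv hkj.symm h)) hβ (hunorm i) (hunorm j) (hunorm k)
  have hβq (l : J) : β ^ q l = 1 := by
    rw [← hu l, ← happly, hα, zero_add, mul_pow, hv l, mul_one]
  have hβ1 : β = 1 := apply_eq_one_of_apply_eq hco (u := fun _ => β) hβq hij rfl
  rw [← huv, hα, hβ1, zero_smul, zero_add, one_smul]

end CoprimeTorsion

section Rigidity

open Matrix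
open scoped Function

variable {ι J : Type*} [Fintype J] {c : ι → ℝ}

lemma dotProduct_eq_sub_one_mul_of_apply_eq_one {R : Type*} [Ring R] {u a : J → R} {i : J}
    (hu : ∀ j ≠ i, u j = 1) (ha : ∑ j, a j = 0) : u ⬝ᵥ a = (u i - 1) * a i := by
  have hsum : u ⬝ᵥ a - ∑ j, a j = (u i - 1) * a i := by
    rw [dotProduct, ← Finset.sum_sub_distrib, Finset.sum_eq_single i]
    · rw [sub_mul, one_mul]
    · intro j _ hj
      rw [hu j hj, one_mul, sub_self]
    · exact fun hi => (hi (Finset.mem_univ i)).elim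
  rw [← hsum, ha, sub_zero]

lemma eq_zero_of_sum_div_dotProduct_eq_zero_of_apply_eq_one {s : Finset ι} {u : ι → J → ℂ} {i : J}
    (hnorm : ∀ m ∈ s, ‖u m i‖ = 1) (hu : ∀ m ∈ s, ∀ j ≠ i, u m j = 1) (hu1 : ∀ m ∈ s, u m ≠ 1)
    (hc : ∀ m ∈ s, 0 ≤ c m) {a : J → ℂ} (ha : ∑ j, a j = 0) (hai : a i ≠ 0)
    (h : ∑ m ∈ s, c m / (u m ⬝ᵥ a) = 0) : ∀ m ∈ s, c m = 0 := by
  refine eq_zero_of_sum_div_sub_one_eq_zero hnorm (fun m hm hmi => hu1 m hm ?_) hc ?_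
  · funext j
    rcases eq_or_ne j i with rfl | hj
    exacts [hmi, hu m hm j hj]
  · refine (div_eq_zero_iff.1 ?_).resolve_right hai
    rw [← h, Finset.sum_div]
    refine Finset.sum_congr rfl fun m hm => ?_
    rw [dotProduct_eq_sub_one_mul_of_apply_eq_one (hu m hm) ha, div_div]

lemma forall_mem_span_one_dotProduct_eq_zero {R : Type*} [Semiring R] {a : J → R} :
    (∀ p ∈ Submodule.span R {1}, p ⬝ᵥ a = 0) ↔ ∑ j, a j = 0 := by
  refine ⟨fun h => ?_, fun h p hp => ?_⟩
  · rw [← one_dotProduct, h 1 (Submodule.mem_span_singleton_self 1)]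
  · obtain ⟨α, rfl⟩ := Submodule.mem_span_singleton.1 hp
    rw [smul_dotProduct, one_dotProduct, h, smul_zero]

lemma exists_sum_eq_zero_forall_dotProduct_ne_zero [Finite ι] [Nontrivial J] {𝕜 : Type*} [Field 𝕜]
    [Infinite 𝕜] {q : J → ℕ} {w : ι → J → 𝕜} (hco : Pairwise (Nat.Coprime on q))
    (hw : ∀ m j, w m j ^ q j = 1) (hw1 : ∀ m, w m ≠ 1) :
    ∃ a : J → 𝕜, ∑ j, a j = 0 ∧ ∀ m, w m ⬝ᵥ a ≠ 0 := by
  obtain ⟨a, ha1, ha⟩ :=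
    exists_dotProduct_eq_zero_forall_dotProduct_ne_zero (Submodule.span 𝕜 {1}) w
  exact ⟨a, forall_mem_span_one_dotProduct_eq_zero.1 ha1,
    fun m => ha m fun hm => hw1 m (eq_one_of_mem_span_one hco (hw m) hm)⟩

theorem eq_zero_of_sum_div_dotProduct_eq_zero [Fintype ι] {q : J → ℕ} {w : ι → J → ℂ}
    (hJ : 3 ≤ Fintype.card J) (hq : ∀ j, q j ≠ 0) (hco : Pairwise (Nat.Coprime on q))
    (hw : ∀ m j, w m j ^ q j = 1) (hinj : Function.Injective w) (hw1 : ∀ m, w m ≠ 1)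
    (hc : ∀ m, 0 ≤ c m)
    (h : ∀ a : J → ℂ, ∑ j, a j = 0 → (∀ m, w m ⬝ᵥ a ≠ 0) → ∑ m, c m / (w m ⬝ᵥ a) = 0) (o : ι) :
    c o = 0 := by
  classical
  obtain ⟨i, hi⟩ := Function.ne_iff.1 (hw1 o)
  have : Nontrivial J := Fintype.one_lt_card_iff_nontrivial.1 (by omega)
  have hthird : ∀ i j : J, ∃ k, k ≠ i ∧ k ≠ j :=
    Cardinal.exists_ne_ne_of_three_le (by simpa using hJ)
  obtain ⟨a, hsum, ha⟩ := exists_sum_eq_zero_forall_dotProduct_ne_zero hco hw hw1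
  have hres : ∑ m with w m ∈ Submodule.span ℂ {1, w o}, (c m : ℂ) / (w m ⬝ᵥ a) = 0 :=
    sum_filter_mem_div_dotProduct_eq_zero
      (Submodule.span_mono (Set.singleton_subset_iff.2 (Set.mem_insert 1 _)))
      (fun a ha => h a (forall_mem_span_one_dotProduct_eq_zero.1 ha))
      (forall_mem_span_one_dotProduct_eq_zero.2 hsum) ha
  have ho : o ∈ ({m | w m ∈ Submodule.span ℂ {1, w o}} : Finset ι) :=
    Finset.mem_filter.2 ⟨Finset.mem_univ o, Submodule.subset_span (Set.mem_insert_of_mem _ rfl)⟩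
  by_cases hj : ∃ j ≠ i, w o j ≠ 1
  · obtain ⟨j, hji, hj⟩ := hj
    rw [Finset.sum_eq_single_of_mem o ho fun m hm hmo => ?_] at hres
    · exact ofReal_eq_zero.1 ((div_eq_zero_iff.1 hres).resolve_right (ha o))
    · exact (hmo (hinj (eq_of_mem_span_pair_of_apply_ne_one hthird hq hco (hw m) (hw o) (hw1 m)
        (Finset.mem_filter.1 hm).2 hji.symm hi hj))).elim
  · push Not at hj
    have hai : a i ≠ 0 := fun hai => ha o <| by
      rw [dotProduct_eq_sub_one_mul_of_apply_eq_one hj hsum, hai, mul_zero]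
    exact eq_zero_of_sum_div_dotProduct_eq_zero_of_apply_eq_one
      (fun m _ => norm_eq_one_of_pow_eq_one (hw m i) (hq i))
      (fun m hm => apply_eq_one_of_mem_span_pair hthird hco (hw m) (Finset.mem_filter.1 hm).2 hj)
      (fun m _ => hw1 m) (fun m _ => hc m) hsum hai hres o ho

theorem apply_eq_zero_of_det_diagonal_add_eq_zero [Fintype ι] [DecidableEq ι] {q : J → ℕ}
    {w : ι → J → ℂ} {o : ι} (hJ : 3 ≤ Fintype.card J) (hq : ∀ j, q j ≠ 0)
    (hco : Pairwise (Nat.Coprime on q)) (hw : ∀ m j, w m j ^ q j = 1)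
    (hinj : Function.Injective w) (ho : w o = 1) {B : Matrix ι ι ℂ} (hB : B.IsHermitian) {lam : ℂ}
    (hdet : ∀ z : J → ℂ, (∀ j, z j ≠ 0) → freeEnergy z = lam →
      (diagonal (fun m => freeEnergy (w m * z) - lam) + B).det = 0) (m : ι) : B m o = 0 := by
  have : Nontrivial J := Fintype.one_lt_card_iff_nontrivial.1 (by omega)
  let v (m : {m // m ≠ o}) : J → ℂ := w m
  have hv (m : {m // m ≠ o}) (j : J) : v m j ^ q j = 1 := hw m j
  have hv1 (m : {m // m ≠ o}) : v m ≠ 1 := fun hm => m.2 (hinj (hm.trans ho.symm))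
  have hasymp {a : J → ℂ} (ha : ∑ j, a j = 0) (hne : ∀ m, v m ⬝ᵥ a ≠ 0) :=
    apply_self_eq_zero_and_sum_div_dotProduct_eq_zero ho hdet ha fun m hm => hne ⟨m, hm⟩
  by_cases hm : m = o
  · obtain ⟨a, ha, hne⟩ := exists_sum_eq_zero_forall_dotProduct_ne_zero hco hv hv1
    exact hm ▸ (hasymp ha hne).1
  · refine normSq_eq_zero.1 (eq_zero_of_sum_div_dotProduct_eq_zero (w := v)
      (c := fun m : {m // m ≠ o} => normSq (B m o)) hJ hq hco hv (hinj.comp Subtype.val_injective)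
      hv1 (fun m => normSq_nonneg _) (fun a ha hne => ?_) ⟨m, hm⟩)
    have hmul (m : ι) : B o m * B m o = normSq (B m o) := by
      rw [← hB.apply o m, normSq_eq_conj_mul_self]
      rfl
    simpa only [hmul] using (hasymp ha hne).2

end Rigidity

section Fourier

open Matrix

lemma eq_zero_of_sum_mul_prod_pow_eq_zero {ι J R : Type*} [Fintype ι] [Fintype J] [CommRing R]
    [IsDomain R] {u : ι → J → R} (hu : Function.Injective u) {c : ι → R}
    (h : ∀ l : J → ℕ, ∑ i, c i * ∏ j, u i j ^ l j = 0) (i : ι) : c i = 0 := by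
  classical
  let χ (i : ι) : (J → Multiplicative ℕ) →* R :=
    ∏ j, (powersHom R (u i j)).comp (Pi.evalMonoidHom _ j)
  have hχ (i : ι) (l : J → Multiplicative ℕ) : χ i l = ∏ j, u i j ^ (l j).toAdd := by
    simp only [χ, MonoidHom.finsetProd_apply]
    rfl
  have hsingle (i : ι) (k : J) : χ i (Pi.mulSingle k (Multiplicative.ofAdd 1)) = u i k := by
    rw [hχ, Finset.prod_eq_single_of_mem k (Finset.mem_univ k) fun j _ hj => ?_]
    · rw [Pi.mulSingle_eq_same, toAdd_ofAdd, pow_one]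
    · rw [Pi.mulSingle_eq_of_ne hj, toAdd_one, pow_zero]
  have hχ_inj : Function.Injective χ := fun i i' hii' => hu <| funext fun k => by
    simpa only [hsingle] using DFunLike.congr_fun hii' (Pi.mulSingle k (Multiplicative.ofAdd 1))
  have hlin := (linearIndependent_monoidHom (J → Multiplicative ℕ) R).comp χ hχ_inj
  refine Fintype.linearIndependent_iff.1 hlin c (funext fun l => ?_) i
  simpa only [Finset.sum_apply, Pi.zero_apply, Pi.smul_apply, Function.comp_apply, hχ,
    smul_eq_mul] using h fun j => (l j).toAdd

variable {d : ℕ} {q : Fin d → ℕ}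

/-- The vector `(ρ^1_{m_1}, …, ρ^d_{m_d})` of roots of unity attached to `m ∈ W`; the diagonal of
the Floquet matrix is the free energy of `z` twisted by it. -/
def character (d : ℕ) (q : Fin d → ℕ) (m : Cell d q) : Fin d → ℂ := fun j => rho d q j (m j : ℕ)

lemma character_apply (m : Cell d q) (j : Fin d) :
    character d q m j = exp (2 * Real.pi * I / q j) ^ (m j : ℕ) := by
  rw [character, rho, ← exp_nat_mul, Int.cast_natCast]
  ring_nf

lemma character_apply_pow (m : Cell d q) (j : Fin d) : character d q m j ^ q j = 1 := by
  rw [character_apply, pow_right_comm, (isPrimitiveRoot_exp _ (m j).pos.ne').pow_eq_one, one_pow]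

lemma character_injective : Function.Injective (character d q) := fun m m' h => funext fun j => by
  have hj := congrFun h j
  rw [character_apply, character_apply] at hj
  exact Fin.ext ((isPrimitiveRoot_exp _ (m j).pos.ne').pow_inj (m j).2 (m' j).2 hj)

lemma character_eq_one {o : Cell d q} (ho : ∀ j, (o j : ℕ) = 0) : character d q o = 1 :=
  funext fun j => by rw [character_apply, ho, pow_zero, Pi.one_apply]

lemma dft_natCast (V : (Fin d → ℤ) → ℝ) (l : Fin d → ℕ) :
    dft d q V (fun j => l j) = (∏ j, (q j : ℂ))⁻¹ *
      ∑ n : Cell d q, (V fun j => (n j : ℕ)) * ∏ j, (character d q n)⁻¹ j ^ l j := by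
  rw [dft, one_div]
  refine congrArg _ (Finset.sum_congr rfl fun n _ => congrArg _ ?_)
  rw [Finset.mul_sum, exp_sum]
  refine Finset.prod_congr rfl fun j _ => ?_
  rw [Pi.inv_apply, character, rho, ← exp_neg, ← exp_nat_mul, Int.cast_natCast, Int.cast_natCast]
  ring_nf

lemma dft_neg (V : (Fin d → ℤ) → ℝ) (l : Fin d → ℤ) :
    dft d q V (-l) = (starRingEnd ℂ) (dft d q V l) := by
  simp only [dft, map_mul, map_sum, ← exp_conj, map_neg, map_div₀, map_prod, map_one, map_natCast,
    map_intCast, conj_I, conj_ofReal, map_ofNat, Pi.neg_apply, Int.cast_neg, neg_mul, neg_div,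
    Finset.sum_neg_distrib, mul_neg, neg_neg]

lemma dft_zero_potential (l : Fin d → ℤ) : dft d q (fun _ => 0) l = 0 := by
  simp only [dft, ofReal_zero, zero_mul, Finset.sum_const_zero, mul_zero]

lemma apply_cell_eq_zero_of_dft_eq_zero (hq : ∀ j, q j ≠ 0) {V : (Fin d → ℤ) → ℝ}
    (h : ∀ m : Cell d q, dft d q V (fun j => (m j : ℕ)) = 0) (n : Cell d q) :
    V (fun j => (n j : ℕ)) = 0 := by
  have hinj : Function.Injective fun n => (character d q n)⁻¹ :=
    inv_injective.comp character_injective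
  refine ofReal_eq_zero.1 (eq_zero_of_sum_mul_prod_pow_eq_zero hinj
    (c := fun n => (V fun j => (n j : ℕ) : ℂ)) (fun l => ?_) n)
  have hmod (n : Cell d q) (j : Fin d) :
      (character d q n)⁻¹ j ^ l j = (character d q n)⁻¹ j ^ (l j % q j) := by
    refine pow_eq_pow_mod _ ?_
    rw [Pi.inv_apply, inv_pow, character_apply_pow, inv_one]
  have hl := h fun j => ⟨l j % q j, Nat.mod_lt _ (Nat.pos_of_ne_zero (hq j))⟩
  simp only [dft_natCast, ← hmod] at hl
  exact (mul_eq_zero.1 hl).resolve_left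
    (inv_ne_zero (Finset.prod_ne_zero_iff.2 fun j _ => Nat.cast_ne_zero.2 (hq j)))

lemma IsPeriodicPotential.eq_zero_of_dft_eq_zero (hq : ∀ j, q j ≠ 0) {V : (Fin d → ℤ) → ℝ}
    (hV : IsPeriodicPotential d q V) (h : ∀ m : Cell d q, dft d q V (fun j => (m j : ℕ)) = 0)
    (n : Fin d → ℤ) : V n = 0 := by
  have hq0 (j : Fin d) : (q j : ℤ) ≠ 0 := Int.natCast_ne_zero.2 (hq j)
  have hmod (j : Fin d) : ((n j % q j).toNat : ℤ) = n j % q j :=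
    Int.toNat_of_nonneg (Int.emod_nonneg _ (hq0 j))
  have hlt (j : Fin d) : (n j % q j).toNat < q j := by
    have := Int.emod_lt_of_pos (n j) (Int.natCast_pos.2 (Nat.pos_of_ne_zero (hq j)))
    have := hmod j
    omega
  have hcell := apply_cell_eq_zero_of_dft_eq_zero hq h fun j => ⟨_, hlt j⟩
  simp only [hmod] at hcell
  rw [← hcell, ← hV (fun j => n j % q j) (fun j => n j - n j % q j) fun j => Int.dvd_self_sub_emod]
  exact congrArg V (funext fun j => (add_sub_cancel _ _).symm)

/-- The circulant matrix `V̂(n - n')`, the part of the Floquet matrix that depends on `V`. -/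
def fourierMatrix (d : ℕ) (q : Fin d → ℕ) (V : (Fin d → ℤ) → ℝ) :
    Matrix (Cell d q) (Cell d q) ℂ :=
  Matrix.of fun n n' => dft d q V fun j => ((n j : ℕ) : ℤ) - ((n' j : ℕ) : ℤ)

lemma floquetDet_eq_det_diagonal_add (V : (Fin d → ℤ) → ℝ) (z : Fin d → ℂ) (lam : ℂ) :
    floquetDet d q V z lam =
      (diagonal (fun m => freeEnergy (character d q m * z) - lam) + fourierMatrix d q V).det := by
  rw [floquetDet]
  congr 1
  ext n n'
  rcases eq_or_ne n n' with rfl | h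
  · simp only [floquetMatrix, fourierMatrix, freeEnergy, character, Matrix.sub_apply,
      Matrix.add_apply, Matrix.smul_apply, Matrix.one_apply_eq, diagonal_apply_eq, Matrix.of_apply,
      if_true, Pi.mul_apply, smul_eq_mul, mul_one]
    ring
  · simp only [floquetMatrix, fourierMatrix, Matrix.sub_apply, Matrix.add_apply, Matrix.smul_apply,
      Matrix.one_apply_ne h, diagonal_apply_ne _ h, Matrix.of_apply, if_neg h, smul_zero, sub_zero]

lemma floquetDet_zero_potential_eq_zero (hq : ∀ j, 0 < q j) {z : Fin d → ℂ} {lam : ℂ}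
    (hz : freeEnergy z = lam) : floquetDet d q (fun _ => 0) z lam = 0 := by
  have hzero : fourierMatrix d q (fun _ => 0) = 0 := by
    ext n n'
    exact dft_zero_potential _
  rw [floquetDet_eq_det_diagonal_add, hzero, add_zero, det_diagonal]
  refine Finset.prod_eq_zero (Finset.mem_univ fun j => ⟨0, hq j⟩) ?_
  rw [character_eq_one fun _ => rfl, one_mul, hz, sub_self]

lemma fourierMatrix_apply_origin {o : Cell d q} (ho : ∀ j, (o j : ℕ) = 0) (V : (Fin d → ℤ) → ℝ)
    (m : Cell d q) :
    fourierMatrix d q V m o = dft d q V fun j => (m j : ℕ) := by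
  simp only [fourierMatrix, Matrix.of_apply, ho, Nat.cast_zero, sub_zero]

lemma isHermitian_fourierMatrix (V : (Fin d → ℤ) → ℝ) : (fourierMatrix d q V).IsHermitian := by
  refine IsHermitian.ext fun n n' => ?_
  rw [fourierMatrix, Matrix.of_apply, Matrix.of_apply, ← starRingEnd_apply, ← dft_neg]
  exact congrArg _ (funext fun j => neg_sub _ _)

end Fourier

theorem fermi_isospectral_with_zero_potential_general
    (d : ℕ) (hd : 3 ≤ d)
    (q : Fin d → ℕ) (hq : ∀ j, 0 < q j)
    (hco : ∀ i j : Fin d, i ≠ j → Nat.Coprime (q i) (q j))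
    (V : (Fin d → ℤ) → ℝ)
    (hVper : IsPeriodicPotential d q V)
    (lam : ℂ)
    (h : ∀ z : Fin d → ℂ, (∀ j, z j ≠ 0) → freeEnergy z = lam → floquetDet d q V z lam = 0) :
    ∀ n : Fin d → ℤ, V n = 0 := by
  obtain ⟨o, ho⟩ : ∃ o : Cell d q, ∀ j, (o j : ℕ) = 0 := ⟨fun j => ⟨0, hq j⟩, fun _ => rfl⟩
  have hcol : ∀ m, fourierMatrix d q V m o = 0 :=
    apply_eq_zero_of_det_diagonal_add_eq_zero (by simpa using hd) (fun j => (hq j).ne') hco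
      character_apply_pow character_injective (character_eq_one ho) (isHermitian_fourierMatrix V)
      fun z hz hlam => floquetDet_eq_det_diagonal_add V z lam ▸ h z hz hlam
  exact hVper.eq_zero_of_dft_eq_zero (fun j => (hq j).ne') fun m =>
    fourierMatrix_apply_origin ho V m ▸ hcol m

/-- Theorem 1.8, Ambarzumian-type theorem: if `V` and the zero potential are
Fermi isospectral, then `V` is zero. -/
theorem fermi_isospectral_with_zero_potential
    (d : ℕ) (hd : 3 ≤ d)
    (q : Fin d → ℕ) (hq : ∀ j, 0 < q j)
    (hco : ∀ i j : Fin d, i ≠ j → Nat.Coprime (q i) (q j))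
    (V : (Fin d → ℤ) → ℝ)
    (hVper : IsPeriodicPotential d q V)
    (hFermi : FermiIsospectral d q V (fun _ => 0)) :
    ∀ n : Fin d → ℤ, V n = 0 := by
  obtain ⟨lam, hset⟩ := hFermi
  exact fermi_isospectral_with_zero_potential_general d hd q hq hco V hVper lam fun z hz hlam =>
    (hset.ge ⟨hz, floquetDet_zero_potential_eq_zero hq hlam⟩).2

end
end

section
/- Let d ≥ 1, let q_1, …, q_d be pairwise coprime positive integers, let V, Y : ℤ^d → ℝ be Γ-periodic, and let λ_0 ∈ ℂ. If the zero sets coincide, {z ∈ (ℂ∖{0})^d : P̃_V(z,λ_0) = 0} = {z ∈ (ℂ∖{0})^d : P̃_Y(z,λ_0) = 0}, then P̃_V(z,λ_0) = P̃_Y(z,λ_0) for all z ∈ (ℂ∖{0})^d. -/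
open scoped BigOperators
open Complex

noncomputable section

/-!
Suppose `d ≥ 2`. Scale one coordinate of a point `z` of the torus by `τ / σ` and the others by
`1 / (σ τ)`. After clearing denominators the Floquet determinant is a polynomial in `τ` whose
coefficients are polynomials in `σ`, and at `σ = 0` it becomes `∏ₙ (aₙ τ² + bₙ)` whatever the
potential. Since the periods are coprime, no two diagonal entries have proportional coefficient
vectors, so for generic `z` this product is separable with nonzero roots; hence the polynomial in
`τ` is separable for all but finitely many `σ`. For such `σ` a polynomial of the same degree and
leading coefficient vanishing on its zero set is equal to it. At `σ = τ = 1` this is the equality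
of the determinants at `z`, and it extends from generic `z` to the whole torus by continuity.

For `d = 1` there is no second coordinate to scale. Instead, conjugation by the cyclic shift shows
that the polynomial obtained by clearing denominators, of degree `2q`, is invariant under
`x ↦ e^{2πi/q} x`. Two such polynomials with the same constant and leading coefficients differ by
a multiple of `x^q`, which vanishes because they have a nonzero root in common.
-/

open Polynomial Filter

section Polynomials

theorem eq_of_separable_of_isRoot {K : Type*} [Field K] {p r : K[X]} (hsplit : p.Splits)
    (hp : p.Separable) (hdeg : (r - p).degree < p.degree) (h : ∀ x, p.IsRoot x → r.IsRoot x) :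
    p = r := by
  have hdvd : p ∣ r - p := by
    rcases eq_or_ne (r - p) 0 with h0 | h0
    · exact h0 ▸ dvd_zero p
    · refine hsplit.dvd_of_roots_le_roots hp.ne_zero <|
        (Multiset.le_iff_subset (nodup_roots hp)).2 fun x hx => ?_
      have hx := isRoot_of_mem_roots hx
      rw [mem_roots h0, IsRoot, eval_sub, h x hx, hx, sub_zero]
  exact (sub_eq_zero.1 (eq_zero_of_dvd_of_degree_lt hdvd hdeg)).symm

theorem eq_of_sub_eq_C_mul_X_pow {R : Type*} [CommRing R] [IsDomain R] {p r : R[X]} {c x : R}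
    {N : ℕ} (hsub : r - p = C c * X ^ N) (hx : x ≠ 0) (hp : p.IsRoot x) (hr : r.IsRoot x) :
    p = r := by
  have hc : c * x ^ N = 0 := by
    simpa [hp.eq_zero, hr.eq_zero, eq_comm] using congrArg (eval x) hsub
  rw [mul_eq_zero_iff_right (pow_ne_zero N hx)] at hc
  rw [hc, C_0, zero_mul, sub_eq_zero] at hsub
  exact hsub.symm

theorem coeff_eq_zero_of_comp_C_mul_X_eq_self {R : Type*} [CommRing R] [IsDomain R] {p : R[X]}
    {ω : R} {N k : ℕ} (hω : IsPrimitiveRoot ω N) (hp : p.comp (C ω * X) = p) (hk : ¬ N ∣ k) :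
    p.coeff k = 0 := by
  have h : p.coeff k * ω ^ k = p.coeff k := by rw [← comp_C_mul_X_coeff, hp]
  by_contra hne
  exact hk ((hω.pow_eq_one_iff_dvd k).1 ((mul_eq_left₀ hne).1 h))

theorem eventually_cofinite_eval_ne_zero {R : Type*} [CommRing R] [IsDomain R] {p : R[X]}
    (hp : p ≠ 0) : ∀ᶠ s in cofinite, p.eval s ≠ 0 :=
  (finite_setOfPred_isRoot hp).subset fun _ hs => not_not.1 hs

theorem separable_map_evalRingHom_iff {K : Type*} [Field K] [CharZero K] {F : K[X][X]} {s : K}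
    (hs : F.leadingCoeff.eval s ≠ 0) :
    (F.map (evalRingHom s)).Separable ↔ (F.resultant (derivative F)).eval s ≠ 0 := by
  have hdeg : (F.map (evalRingHom s)).natDegree = F.natDegree :=
    natDegree_map_of_leadingCoeff_ne_zero _ hs
  have hF : F.map (evalRingHom s) ≠ 0 := fun h0 => hs <| by
    simpa [coeff_natDegree] using congrArg (coeff · F.natDegree) h0
  rw [← coe_evalRingHom, ← resultant_map_map, ← derivative_map, natDegree_derivative, ← hdeg,
    ← natDegree_derivative, Ne, resultant_eq_zero_iff]
  simp [hF, Separable]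

theorem eventually_cofinite_separable_map_evalRingHom {K : Type*} [Field K] [CharZero K]
    {F : K[X][X]} {a : K} (ha : F.leadingCoeff.eval a ≠ 0)
    (hsep : (F.map (evalRingHom a)).Separable) :
    ∀ᶠ s in cofinite, (F.map (evalRingHom s)).Separable := by
  have hlead : F.leadingCoeff ≠ 0 := fun h0 => ha (by rw [h0, eval_zero])
  have hres : F.resultant (derivative F) ≠ 0 := fun h0 =>
    (separable_map_evalRingHom_iff ha).1 hsep (by rw [h0, eval_zero])
  filter_upwards [eventually_cofinite_eval_ne_zero hlead, eventually_cofinite_eval_ne_zero hres]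
    with s hs hs' using (separable_map_evalRingHom_iff hs).2 hs'

theorem eq_of_eventually_cofinite_map_evalRingHom_eq {R : Type*} [CommRing R] [IsDomain R]
    [Infinite R] {F G : R[X][X]}
    (h : ∀ᶠ s in cofinite, F.map (evalRingHom s) = G.map (evalRingHom s)) : F = G := by
  ext1 k
  refine eq_of_infinite_eval_eq _ _ (frequently_cofinite_iff_infinite.1 (h.frequently.mono ?_))
  intro s hs
  simpa using congrArg (coeff · k) hs

theorem eval_zero_prod_C_add_C_mul_X_sq_ne_zero {ι R : Type*} [Fintype ι]
    [CommRing R] [IsDomain R] {α : ι → R} (hα : ∀ n, α n ≠ 0) (α' : ι → R) :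
    (∏ n, (C (α n) + C (α' n) * X ^ 2)).eval 0 ≠ 0 := by
  simpa [eval_prod, Finset.prod_ne_zero_iff] using hα

theorem eventually_cofinite_prod_add_mul_sq_ne_zero {ι R : Type*} [Fintype ι]
    [CommRing R] [IsDomain R] {α α' : ι → R} (hα : ∀ n, α n ≠ 0) :
    ∀ᶠ s in cofinite, ∏ n, (α n + α' n * s ^ 2) ≠ 0 := by
  have hp : ∏ n, (C (α n) + C (α' n) * X ^ 2) ≠ 0 := fun h =>
    eval_zero_prod_C_add_C_mul_X_sq_ne_zero hα α' (by rw [h, eval_zero])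
  simpa [eval_prod] using eventually_cofinite_eval_ne_zero hp

end Polynomials

section Determinants
variable {ι R : Type*} [Fintype ι] [DecidableEq ι] [CommRing R]

theorem natDegree_det_le {M : Matrix ι ι R[X]} {k : ℕ} (hM : ∀ i j, (M i j).natDegree ≤ k) :
    M.det.natDegree ≤ Fintype.card ι * k := by
  rw [Matrix.det_apply]
  refine natDegree_sum_le_of_forall_le _ _ fun σ _ => (natDegree_smul_le _ _).trans <|
    (natDegree_prod_le _ _).trans ?_
  simpa using Finset.sum_le_card_nsmul Finset.univ _ k fun i _ => hM (σ i) i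

theorem coeff_det_of_natDegree_le {M : Matrix ι ι R[X]} {k : ℕ}
    (hM : ∀ i j, (M i j).natDegree ≤ k) :
    M.det.coeff (Fintype.card ι * k) = (M.map (coeff · k)).det := by
  simp only [Matrix.det_apply, finsetSum_coeff, coeff_smul, Matrix.map_apply]
  refine Finset.sum_congr rfl fun σ _ => ?_
  rw [← Finset.card_univ, coeff_prod_of_natDegree_le _ _ _ fun i _ => hM (σ i) i]

end Determinants

section QuadraticPencil
variable {ι R : Type*} [Fintype ι] [DecidableEq ι] [CommRing R]

/-- The determinant of the quadratic matrix polynomial `a X² + B X + b` whose outer coefficients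
`a` and `b` are diagonal. -/
def quadraticPencil (a b : ι → R) (B : Matrix ι ι R) : R[X] :=
  (Matrix.diagonal (fun n => C (a n) * X ^ 2 + C (b n)) + (X : R[X]) • B.map C).det

section CommRing
variable {S : Type*} [CommRing S] (a b : ι → R) (B : Matrix ι ι R)

theorem map_quadraticPencil (f : R →+* S) :
    (quadraticPencil a b B).map f = quadraticPencil (f ∘ a) (f ∘ b) (B.map f) := by
  rw [quadraticPencil, quadraticPencil, ← coe_mapRingHom, RingHom.map_det]
  congr 1
  ext1 i j
  rcases eq_or_ne i j with rfl | hij <;> simp [*]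

theorem eval_quadraticPencil (x : R) :
    (quadraticPencil a b B).eval x =
      (Matrix.diagonal (fun n => a n * x ^ 2 + b n) + x • B).det := by
  rw [quadraticPencil, ← coe_evalRingHom, RingHom.map_det]
  congr 1
  ext1 i j
  rcases eq_or_ne i j with rfl | hij <;> simp [*, mul_comm x]

theorem eval_zero_quadraticPencil : (quadraticPencil a b B).eval 0 = ∏ n, b n := by
  rw [eval_quadraticPencil, zero_smul, add_zero, Matrix.det_diagonal]
  simp

omit [Fintype ι] in
theorem natDegree_quadraticPencil_entry_le (i j : ι) :
    ((Matrix.diagonal (fun n => C (a n) * X ^ 2 + C (b n)) + (X : R[X]) • B.map C :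
      Matrix ι ι R[X]) i j).natDegree ≤ 2 := by
  rcases eq_or_ne i j with rfl | hij
  · simp only [Matrix.add_apply, Matrix.diagonal_apply_eq, Matrix.smul_apply, Matrix.map_apply,
      smul_eq_mul]
    compute_degree
  · simp only [Matrix.add_apply, Matrix.diagonal_apply_ne _ hij, Matrix.smul_apply,
      Matrix.map_apply, smul_eq_mul]
    compute_degree!

theorem natDegree_quadraticPencil_le :
    (quadraticPencil a b B).natDegree ≤ Fintype.card ι * 2 :=
  natDegree_det_le (natDegree_quadraticPencil_entry_le a b B)

theorem coeff_quadraticPencil_card_mul_two :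
    (quadraticPencil a b B).coeff (Fintype.card ι * 2) = ∏ n, a n := by
  rw [quadraticPencil, coeff_det_of_natDegree_le (natDegree_quadraticPencil_entry_le a b B),
    ← Matrix.det_diagonal]
  congr 1
  ext1 i j
  rcases eq_or_ne i j with rfl | hij <;> simp [*]

variable {a}

theorem natDegree_quadraticPencil (ha : ∏ n, a n ≠ 0) :
    (quadraticPencil a b B).natDegree = Fintype.card ι * 2 :=
  natDegree_eq_of_le_of_coeff_ne_zero (natDegree_quadraticPencil_le a b B)
    ((coeff_quadraticPencil_card_mul_two a b B).trans_ne ha)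

theorem leadingCoeff_quadraticPencil (ha : ∏ n, a n ≠ 0) :
    (quadraticPencil a b B).leadingCoeff = ∏ n, a n := by
  rw [leadingCoeff, natDegree_quadraticPencil b B ha, coeff_quadraticPencil_card_mul_two]

theorem degree_quadraticPencil_sub_lt (ha : ∏ n, a n ≠ 0) (B' : Matrix ι ι R) :
    (quadraticPencil a b B' - quadraticPencil a b B).degree < (quadraticPencil a b B).degree := by
  have hne (B₀ : Matrix ι ι R) : quadraticPencil a b B₀ ≠ 0 :=
    leadingCoeff_ne_zero.1 ((leadingCoeff_quadraticPencil b B₀ ha).trans_ne ha)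
  have hdeg : (quadraticPencil a b B').degree = (quadraticPencil a b B).degree := by
    simp only [degree_eq_natDegree, hne, natDegree_quadraticPencil b _ ha, Ne, not_false_eq_true]
  rw [← hdeg]
  exact degree_sub_lt_left hdeg (hne B') <| by simp only [leadingCoeff_quadraticPencil b _ ha]

variable {b B}

theorem ne_zero_of_isRoot_quadraticPencil (hb : ∏ n, b n ≠ 0) {x : R}
    (hx : (quadraticPencil a b B).IsRoot x) : x ≠ 0 := by
  rintro rfl
  exact hb ((eval_zero_quadraticPencil a b B).symm.trans hx)

end CommRing

section Field
variable {K : Type*} [Field K] {a b : ι → K}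

theorem isCoprime_C_mul_X_sq_add_C {α β γ δ : K} (h : α * δ ≠ γ * β) :
    IsCoprime (C α * X ^ 2 + C β) (C γ * X ^ 2 + C δ) := by
  have h : α * δ - γ * β ≠ 0 := sub_ne_zero.2 h
  refine ⟨C (-γ / (α * δ - γ * β)), C (α / (α * δ - γ * β)), ?_⟩
  calc _ = C ((α * δ - γ * β)⁻¹) * C (α * δ - γ * β) := by
        simp only [div_eq_mul_inv, C_mul, C_sub, C_neg]
        ring
    _ = 1 := by rw [← C_mul, inv_mul_cancel₀ h, C_1]

theorem separable_C_mul_X_sq_add_C [NeZero (2 : K)] {α β : K} (hα : α ≠ 0) (hβ : β ≠ 0) :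
    (C α * X ^ 2 + C β).Separable := by
  have hX : derivative (C α * X ^ 2 + C β) * X = C (2 * α) * X ^ 2 + C 0 := by
    rw [derivative_add, derivative_C_mul_X_sq, derivative_C, C_0, mul_comm 2 α]
    ring
  refine IsCoprime.of_mul_right_left (z := X) (hX ▸ isCoprime_C_mul_X_sq_add_C ?_)
  rw [mul_zero]
  exact (mul_ne_zero (mul_ne_zero two_ne_zero hα) hβ).symm

theorem separable_quadraticPencil_zero [NeZero (2 : K)] (ha : ∀ n, a n ≠ 0) (hb : ∀ n, b n ≠ 0)
    (hab : Pairwise fun n m => a n * b m ≠ a m * b n) :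
    (quadraticPencil a b 0).Separable := by
  have hprod : quadraticPencil a b 0 = ∏ n, (C (a n) * X ^ 2 + C (b n)) := by
    simp [quadraticPencil]
  rw [hprod]
  exact separable_prod (fun n m hnm => isCoprime_C_mul_X_sq_add_C (hab hnm))
    fun n => separable_C_mul_X_sq_add_C (ha n) (hb n)

theorem quadraticPencil_eq_of_isRoot [IsAlgClosed K] {B B' : Matrix ι ι K}
    (ha : ∏ n, a n ≠ 0) (hb : ∏ n, b n ≠ 0) (hsep : (quadraticPencil a b B).Separable)
    (h : ∀ x ≠ 0, (quadraticPencil a b B).IsRoot x → (quadraticPencil a b B').IsRoot x) :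
    quadraticPencil a b B = quadraticPencil a b B' :=
  eq_of_separable_of_isRoot (IsAlgClosed.splits _) hsep (degree_quadraticPencil_sub_lt b B ha B')
    fun x hx => h x (ne_zero_of_isRoot_quadraticPencil hb hx) hx

theorem exists_isRoot_quadraticPencil [IsAlgClosed K] [Nonempty ι] (ha : ∏ n, a n ≠ 0)
    (b : ι → K) (B : Matrix ι ι K) : ∃ x, (quadraticPencil a b B).IsRoot x :=
  IsAlgClosed.exists_root _ fun h0 => by
    simpa [natDegree_eq_zero_iff_degree_le_zero.2 h0.le] using natDegree_quadraticPencil b B ha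

theorem eval_quadraticPencil_of_ne_zero (B : Matrix ι ι K) {x : K} (hx : x ≠ 0) :
    (quadraticPencil a b B).eval x =
      x ^ Fintype.card ι * (Matrix.diagonal (fun n => a n * x + b n * x⁻¹) + B).det := by
  rw [eval_quadraticPencil, ← Matrix.det_smul]
  congr 1
  ext1 i j
  rcases eq_or_ne i j with rfl | hij
  · simp only [Matrix.add_apply, Matrix.diagonal_apply_eq, Matrix.smul_apply, smul_eq_mul]
    field_simp
  · simp [hij]

end Field
end QuadraticPencil

section ScaledPencil
variable {ι R K : Type*} [Fintype ι] [DecidableEq ι] [CommRing R] [Field K] {a b a' b' : ι → K}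

/-- The pencil in the variable `τ` obtained from `a τ / σ + b / (σ τ) + a' σ τ + b' σ / τ + B` on
multiplying by `σ τ`; its coefficients are polynomials in `σ`, and at `σ = 0` only `a` and `b`
survive. -/
def scaledPencil (a b a' b' : ι → R) (B : Matrix ι ι R) : R[X][X] :=
  quadraticPencil (fun n => C (a n) + C (a' n) * X ^ 2) (fun n => C (b n) + C (b' n) * X ^ 2)
    ((X : R[X]) • B.map C)

theorem map_evalRingHom_scaledPencil (a b a' b' : ι → R) (B : Matrix ι ι R) (s : R) :
    (scaledPencil a b a' b' B).map (evalRingHom s) =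
      quadraticPencil (fun n => a n + a' n * s ^ 2) (fun n => b n + b' n * s ^ 2) (s • B) := by
  rw [scaledPencil, map_quadraticPencil]
  congr 1
  · ext n
    simp
  · ext n
    simp
  · ext n m
    simp [mul_comm s]

theorem evalEval_scaledPencil (B : Matrix ι ι K) {s t : K} (hs : s ≠ 0) (ht : t ≠ 0) :
    (scaledPencil a b a' b' B).evalEval s t = (s * t) ^ Fintype.card ι *
      (Matrix.diagonal (fun n => a n * (t / s) + b n * (s * t)⁻¹
        + (a' n * (s * t) + b' n * (s / t))) + B).det := by
  rw [← map_evalRingHom_eval, map_evalRingHom_scaledPencil, eval_quadraticPencil,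
    ← Matrix.det_smul]
  congr 1
  ext1 i j
  rcases eq_or_ne i j with rfl | hij
  · simp only [Matrix.add_apply, Matrix.diagonal_apply_eq, Matrix.smul_apply, smul_eq_mul]
    field_simp
    ring
  · simp only [Matrix.add_apply, Matrix.diagonal_apply_ne _ hij, Matrix.smul_apply, smul_eq_mul,
      zero_add]
    ring

theorem eventually_cofinite_separable_scaledPencil [CharZero K]
    (ha : ∀ n, a n ≠ 0) (hb : ∀ n, b n ≠ 0) (hab : Pairwise fun n m => a n * b m ≠ a m * b n)
    (B : Matrix ι ι K) :
    ∀ᶠ s in cofinite, ((scaledPencil a b a' b' B).map (evalRingHom s)).Separable := by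
  have hlead := eval_zero_prod_C_add_C_mul_X_sq_ne_zero ha a'
  refine eventually_cofinite_separable_map_evalRingHom (a := 0) ?_ ?_
  · rwa [scaledPencil, leadingCoeff_quadraticPencil]
    exact fun h => hlead (by rw [h, eval_zero])
  · simpa [map_evalRingHom_scaledPencil] using separable_quadraticPencil_zero ha hb hab

theorem scaledPencil_eq_of_evalEval_eq_zero [CharZero K] [IsAlgClosed K] {B B' : Matrix ι ι K}
    (ha : ∀ n, a n ≠ 0) (hb : ∀ n, b n ≠ 0) (hab : Pairwise fun n m => a n * b m ≠ a m * b n)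
    (h : ∀ s ≠ 0, ∀ t ≠ 0, (scaledPencil a b a' b' B).evalEval s t = 0 →
      (scaledPencil a b a' b' B').evalEval s t = 0) :
    scaledPencil a b a' b' B = scaledPencil a b a' b' B' := by
  refine eq_of_eventually_cofinite_map_evalRingHom_eq ?_
  filter_upwards [eventually_cofinite_separable_scaledPencil ha hb hab B,
    eventually_cofinite_ne 0,
    eventually_cofinite_prod_add_mul_sq_ne_zero (α' := a') ha,
    eventually_cofinite_prod_add_mul_sq_ne_zero (α' := b') hb] with s hsep hs has hbs
  simp only [← map_evalRingHom_eval, map_evalRingHom_scaledPencil] at hsep h ⊢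
  exact quadraticPencil_eq_of_isRoot has hbs hsep (h s hs)

end ScaledPencil

section Residual

theorem eventually_residual_apply_ne_zero {𝕜 E : Type*} [NontriviallyNormedField 𝕜]
    [NormedAddCommGroup E] [NormedSpace 𝕜 E] {f : E →L[𝕜] 𝕜} (hf : f ≠ 0) :
    ∀ᶠ x in residual E, f x ≠ 0 :=
  residual_of_dense_open (isOpen_ne.preimage f.continuous)
    ((dense_compl_singleton 0).preimage (f.isOpenMap_of_ne_zero hf))

theorem eventually_residual_sum_mul_ne_zero {𝕜 κ : Type*} [NontriviallyNormedField 𝕜] [Finite κ]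
    {s : Finset κ} {c : κ → 𝕜} (hc : ∃ j ∈ s, c j ≠ 0) :
    ∀ᶠ z in residual (κ → 𝕜), ∑ j ∈ s, c j * z j ≠ 0 := by
  classical
  have := Fintype.ofFinite κ
  obtain ⟨j, hj, hcj⟩ := hc
  have hf : ∑ j ∈ s, c j • ContinuousLinearMap.proj (R := 𝕜) (φ := fun _ : κ => 𝕜) j ≠ 0 :=
    fun h => hcj <| by simpa [Pi.single_apply, hj] using congrArg (· (Pi.single j 1)) h
  simpa using eventually_residual_apply_ne_zero hf

end Residual

section LaurentDet
variable {ι κ : Type*} [Fintype ι] [DecidableEq ι] [Fintype κ]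

/-- The determinant of `B` plus a diagonal matrix of Laurent polynomials in `z`, the Floquet
determinant for general weights `r` and a general matrix `B` in place of `V̂(n - n') - λ`. -/
def laurentDet {K : Type*} [Field K] (r : ι → κ → K) (B : Matrix ι ι K) (z : κ → K) : K :=
  (Matrix.diagonal (fun n => ∑ j, (r n j * z j + (r n j * z j)⁻¹)) + B).det

theorem continuousOn_laurentDet {r : ι → κ → ℂ} (hr : ∀ n j, r n j ≠ 0) (B : Matrix ι ι ℂ) :
    ContinuousOn (laurentDet r B) {z | ∀ j, z j ≠ 0} := by
  have hcoord (n j) : ContinuousOn (fun z : κ → ℂ => r n j * z j) {z | ∀ j, z j ≠ 0} := by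
    fun_prop
  rw [continuousOn_iff_continuous_domRestrict]
  refine Continuous.matrix_det (.add (.matrix_diagonal ?_) continuous_const)
  refine continuous_pi fun n => continuous_finsetSum _ fun j _ => ?_
  exact ((hcoord n j).add
    ((hcoord n j).inv₀ fun z hz => mul_ne_zero (hr n j) (hz j))).domRestrict

section Scaling
variable {K : Type*} [Field K] [DecidableEq κ] (r : ι → κ → K) (z : κ → K) (i : κ)

/-- The rescaling of `z` by `t / s` in the coordinate `i` and by `1 / (s t)` in all others. -/
def scaleTorus (s t : K) : κ → K :=
  fun j => z j * if j = i then t / s else (s * t)⁻¹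

/-- `laurentDet r B` along the two-parameter curve `scaleTorus z i`, cleared of denominators. -/
def laurentPencil (B : Matrix ι ι K) : K[X][X] :=
  scaledPencil (fun n => r n i * z i) (fun n => ∑ j ∈ Finset.univ.erase i, r n j * z j)
    (fun n => ∑ j ∈ Finset.univ.erase i, (r n j * z j)⁻¹) (fun n => (r n i * z i)⁻¹) B

theorem evalEval_laurentPencil (B : Matrix ι ι K) {s t : K} (hs : s ≠ 0) (ht : t ≠ 0) :
    (laurentPencil r z i B).evalEval s t =
      (s * t) ^ Fintype.card ι * laurentDet r B (scaleTorus z i s t) := by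
  rw [laurentPencil, evalEval_scaledPencil B hs ht, laurentDet]
  congr! 4
  ext n
  have hj : ∀ j ∈ Finset.univ.erase i,
      r n j * scaleTorus z i s t j + (r n j * scaleTorus z i s t j)⁻¹ =
        r n j * z j * (s * t)⁻¹ + (r n j * z j)⁻¹ * (s * t) := fun j hj => by
    rw [scaleTorus, if_neg (Finset.ne_of_mem_erase hj), ← mul_assoc, mul_inv _ (s * t)⁻¹, inv_inv]
  rw [← Finset.add_sum_erase _ _ (Finset.mem_univ i), Finset.sum_congr rfl hj,
    Finset.sum_add_distrib, ← Finset.sum_mul, ← Finset.sum_mul, scaleTorus, if_pos rfl,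
    ← mul_assoc (r n i), mul_inv _ (t / s), inv_div]
  ring

theorem laurentDet_eq_of_generic [CharZero K] [IsAlgClosed K] {r : ι → κ → K} {z : κ → K} {i : κ}
    {B B' : Matrix ι ι K} (hr : ∀ n j, r n j ≠ 0) (hz : ∀ j, z j ≠ 0)
    (hsum : ∀ n, ∑ j ∈ Finset.univ.erase i, r n j * z j ≠ 0)
    (hcross : ∀ n m, n ≠ m →
      ∑ j ∈ Finset.univ.erase i, (r n i * r m j - r m i * r n j) * z j ≠ 0)
    (h : ∀ w : κ → K, (∀ j, w j ≠ 0) → laurentDet r B w = 0 → laurentDet r B' w = 0) :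
    laurentDet r B z = laurentDet r B' z := by
  have hpencil : laurentPencil r z i B = laurentPencil r z i B' := by
    refine scaledPencil_eq_of_evalEval_eq_zero (fun n => mul_ne_zero (hr n i) (hz i)) hsum
      (fun n m hnm heq => hcross n m hnm ?_) fun s hs t ht => ?_
    · refine (mul_eq_zero.1 (?_ : z i * _ = 0)).resolve_left (hz i)
      rw [← sub_eq_zero.2 heq, Finset.mul_sum, Finset.mul_sum, Finset.mul_sum,
        ← Finset.sum_sub_distrib]
      exact Finset.sum_congr rfl fun j _ => by ring
    · have hw (j) : scaleTorus z i s t j ≠ 0 := by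
        unfold scaleTorus
        split_ifs <;> simp [hz, hs, ht]
      change (laurentPencil r z i B).evalEval s t = 0 → (laurentPencil r z i B').evalEval s t = 0
      rw [evalEval_laurentPencil _ _ _ _ hs ht, evalEval_laurentPencil _ _ _ _ hs ht]
      simpa [hs, ht] using h _ hw
  have hone : scaleTorus z i 1 1 = z := by
    ext j
    simp [scaleTorus]
  simpa [evalEval_laurentPencil, hone] using congrArg (evalEval 1 1) hpencil

end Scaling

variable {r : ι → κ → ℂ} {i : κ} {B B' : Matrix ι ι ℂ}

theorem eventually_residual_laurentDet_eq [Nontrivial κ] (hr : ∀ n j, r n j ≠ 0)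
    (hprop : ∀ n m, n ≠ m → ∃ j, r n i * r m j ≠ r m i * r n j)
    (h : ∀ w : κ → ℂ, (∀ j, w j ≠ 0) → laurentDet r B w = 0 → laurentDet r B' w = 0) :
    ∀ᶠ z in residual (κ → ℂ), (∀ j, z j ≠ 0) → laurentDet r B z = laurentDet r B' z := by
  classical
  have hsum (n) : ∀ᶠ z in residual (κ → ℂ), ∑ j ∈ Finset.univ.erase i, r n j * z j ≠ 0 := by
    obtain ⟨j, hj⟩ := exists_ne i
    exact eventually_residual_sum_mul_ne_zero ⟨j, by simpa using hj, hr n j⟩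
  have hcross (n m) (hnm : n ≠ m) : ∀ᶠ z in residual (κ → ℂ),
      ∑ j ∈ Finset.univ.erase i, (r n i * r m j - r m i * r n j) * z j ≠ 0 := by
    obtain ⟨j, hj⟩ := hprop n m hnm
    refine eventually_residual_sum_mul_ne_zero ⟨j, ?_, sub_ne_zero.2 hj⟩
    simpa using fun hji : j = i => hj (hji ▸ mul_comm _ _)
  filter_upwards [eventually_all.2 hsum, eventually_all.2 fun n => eventually_all.2 fun m =>
    eventually_imp_distrib_left.2 (hcross n m)] with z hsum hcross hz
  exact laurentDet_eq_of_generic hr hz hsum hcross h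

theorem laurentDet_eq_of_zero_imp [Nontrivial κ] (hr : ∀ n j, r n j ≠ 0)
    (hprop : ∀ n m, n ≠ m → ∃ j, r n i * r m j ≠ r m i * r n j)
    (h : ∀ w : κ → ℂ, (∀ j, w j ≠ 0) → laurentDet r B w = 0 → laurentDet r B' w = 0)
    {z : κ → ℂ} (hz : ∀ j, z j ≠ 0) : laurentDet r B z = laurentDet r B' z := by
  set torus := {z : κ → ℂ | ∀ j, z j ≠ 0}
  set agree := {z : κ → ℂ | z ∈ torus → laurentDet r B z = laurentDet r B' z}
  have hopen : IsOpen torus := by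
    simp only [torus, Set.ofPred_forall]
    exact isOpen_iInter_of_finite fun j => isOpen_ne.preimage (continuous_apply j)
  have hdense : Dense agree := dense_of_mem_residual (eventually_residual_laurentDet_eq hr hprop h)
  have heq : Set.EqOn (laurentDet r B) (laurentDet r B') (torus ∩ agree) := fun w hw => hw.2 hw.1
  exact heq.of_subset_closure (continuousOn_laurentDet hr B) (continuousOn_laurentDet hr B')
    Set.inter_subset_left (hdense.open_subset_closure_inter hopen) hz

end LaurentDet

section Rotation
variable {ι : Type*} [Fintype ι] [DecidableEq ι]

theorem quadraticPencil_comp_C_mul_X {R : Type*} [CommRing R] {a b : ι → R} {B : Matrix ι ι R}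
    {ω : R} {σ : ι ≃ ι} (hω : ω ^ Fintype.card ι = 1) (ha : ∀ n, a (σ n) = ω * a n)
    (hb : ∀ n, ω * b (σ n) = b n) (hB : B.submatrix σ σ = B) :
    (quadraticPencil a b B).comp (C ω * X) = quadraticPencil a b B := by
  set M : Matrix ι ι R[X] := Matrix.diagonal (fun n => C (a n) * X ^ 2 + C (b n)) +
    (X : R[X]) • B.map C with hM
  have hentry : M.map (compRingHom (C ω * X)) = C ω • M.submatrix σ σ := by
    ext1 n m
    have hBnm : B (σ n) (σ m) = B n m := congrFun (congrFun hB n) m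
    rcases eq_or_ne n m with rfl | hnm
    · simp only [hM, coe_compRingHom, Matrix.map_apply, Matrix.add_apply, Matrix.diagonal_apply_eq,
        ← hb n, C_mul, Matrix.smul_apply, smul_eq_mul, add_comp, mul_comp, C_comp, pow_comp,
        X_comp, Matrix.submatrix_apply, ha, hBnm]
      ring
    · simp only [hM, coe_compRingHom, Matrix.map_apply, Matrix.add_apply, Matrix.smul_apply,
        smul_eq_mul, Matrix.diagonal_apply_ne _ hnm,
        Matrix.diagonal_apply_ne _ (σ.injective.ne hnm), zero_add, mul_comp, C_comp,
        X_comp, Matrix.submatrix_apply, hBnm]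
      ring
  have hdet : (quadraticPencil a b B).comp (C ω * X) = (M.map (compRingHom (C ω * X))).det :=
    RingHom.map_det (compRingHom (C ω * X)) M
  rw [hdet, hentry, Matrix.det_smul, Matrix.det_submatrix_equiv_self, ← C_pow, hω, C_1, one_mul]
  rfl

theorem quadraticPencil_sub_eq_of_comp_C_mul_X {R : Type*} [CommRing R] [IsDomain R]
    {a b : ι → R} {B B' : Matrix ι ι R} {ω : R} (hω : IsPrimitiveRoot ω (Fintype.card ι))
    (ha : ∏ n, a n ≠ 0)
    (hB : (quadraticPencil a b B).comp (C ω * X) = quadraticPencil a b B)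
    (hB' : (quadraticPencil a b B').comp (C ω * X) = quadraticPencil a b B') :
    ∃ c, quadraticPencil a b B' - quadraticPencil a b B = C c * X ^ Fintype.card ι := by
  set D := quadraticPencil a b B' - quadraticPencil a b B with hD
  refine ⟨D.coeff (Fintype.card ι), ?_⟩
  ext k
  rw [coeff_C_mul_X_pow]
  split_ifs with hk
  · rw [hk]
  by_cases hdvd : Fintype.card ι ∣ k
  swap
  · exact coeff_eq_zero_of_comp_C_mul_X_eq_self hω (by rw [hD, sub_comp, hB, hB']) hdvd
  obtain ⟨m, rfl⟩ := hdvd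
  rcases eq_or_ne m 0 with rfl | hm0
  · simp [hD, coeff_zero_eq_eval_zero, eval_zero_quadraticPencil]
  have hm : 2 ≤ m := (Nat.two_le_iff m).2 ⟨hm0, fun hm1 => hk (by rw [hm1, mul_one])⟩
  refine coeff_eq_zero_of_degree_lt ((degree_quadraticPencil_sub_lt b B ha B').trans_le ?_)
  rw [← natDegree_le_iff_degree_le, natDegree_quadraticPencil b B ha]
  exact Nat.mul_le_mul_left _ hm

theorem quadraticPencil_eq_of_comp_C_mul_X {K : Type*} [Field K] [IsAlgClosed K] [Nonempty ι]
    {a b : ι → K} {B B' : Matrix ι ι K} {ω : K} (hω : IsPrimitiveRoot ω (Fintype.card ι))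
    (ha : ∏ n, a n ≠ 0) (hb : ∏ n, b n ≠ 0)
    (hB : (quadraticPencil a b B).comp (C ω * X) = quadraticPencil a b B)
    (hB' : (quadraticPencil a b B').comp (C ω * X) = quadraticPencil a b B')
    (h : ∀ x ≠ 0, (quadraticPencil a b B).IsRoot x → (quadraticPencil a b B').IsRoot x) :
    quadraticPencil a b B = quadraticPencil a b B' := by
  obtain ⟨c, hc⟩ := quadraticPencil_sub_eq_of_comp_C_mul_X hω ha hB hB'
  obtain ⟨x, hx⟩ := exists_isRoot_quadraticPencil ha b B
  have hx0 := ne_zero_of_isRoot_quadraticPencil hb hx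
  exact eq_of_sub_eq_C_mul_X_pow hc hx0 hx (h x hx0 hx)

variable {K κ : Type*} [Field K] [Fintype κ] [Unique κ] {r : ι → κ → K}

theorem eval_quadraticPencil_eq_pow_mul_laurentDet (r : ι → κ → K) (B : Matrix ι ι K) {z : κ → K}
    (hz : z default ≠ 0) :
    (quadraticPencil (r · default) (fun n => (r n default)⁻¹) B).eval (z default) =
      z default ^ Fintype.card ι * laurentDet r B z := by
  simp [eval_quadraticPencil_of_ne_zero _ hz, laurentDet, mul_comm (z default)⁻¹]

theorem laurentDet_eq_of_zero_imp_of_unique [IsAlgClosed K] [Nonempty ι] {B B' : Matrix ι ι K}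
    {ω : K} {σ : ι ≃ ι} (hω : IsPrimitiveRoot ω (Fintype.card ι)) (hr : ∀ n, r n default ≠ 0)
    (hσ : ∀ n, r (σ n) default = ω * r n default)
    (hB : B.submatrix σ σ = B) (hB' : B'.submatrix σ σ = B')
    (h : ∀ w : κ → K, (∀ j, w j ≠ 0) → laurentDet r B w = 0 → laurentDet r B' w = 0)
    {z : κ → K} (hz : ∀ j, z j ≠ 0) : laurentDet r B z = laurentDet r B' z := by
  have hω0 : ω ≠ 0 := hω.ne_zero Fintype.card_ne_zero
  have hcomp {B₀ : Matrix ι ι K} (hB₀ : B₀.submatrix σ σ = B₀) :=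
    quadraticPencil_comp_C_mul_X (a := (r · default)) (b := fun n => (r n default)⁻¹)
      hω.pow_eq_one hσ (fun n => by rw [hσ, mul_inv, mul_inv_cancel_left₀ hω0]) hB₀
  have hpencil := quadraticPencil_eq_of_comp_C_mul_X hω
    (Finset.prod_ne_zero_iff.2 fun n _ => hr n)
    (Finset.prod_ne_zero_iff.2 fun n _ => inv_ne_zero (hr n)) (hcomp hB) (hcomp hB')
    fun x hx => by
      have heval (B₀) := eval_quadraticPencil_eq_pow_mul_laurentDet r B₀ (z := fun _ : κ => x) hx
      simpa [IsRoot, heval, hx] using h (fun _ => x) fun _ => hx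
  simpa [eval_quadraticPencil_eq_pow_mul_laurentDet r _ (hz default), hz default] using
    congrArg (eval (z default)) hpencil

end Rotation

section RootsOfUnity
variable {d : ℕ} {q : Fin d → ℕ} {j : Fin d}

theorem rho_ne_zero (m : ℤ) : rho d q j m ≠ 0 :=
  Complex.exp_ne_zero _

theorem rho_eq_zpow (m : ℤ) : rho d q j m = rho d q j 1 ^ m := by
  rw [rho, rho, ← Complex.exp_int_mul]
  congr 1
  push_cast
  ring

theorem rho_add (m m' : ℤ) : rho d q j (m + m') = rho d q j m * rho d q j m' := by
  rw [rho_eq_zpow, zpow_add₀ (rho_ne_zero 1), ← rho_eq_zpow, ← rho_eq_zpow m']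

theorem isPrimitiveRoot_rho_one (hq : 0 < q j) : IsPrimitiveRoot (rho d q j 1) (q j) := by
  simpa [rho] using Complex.isPrimitiveRoot_exp (q j) hq.ne'

theorem rho_eq_one_iff (hq : 0 < q j) {m : ℤ} : rho d q j m = 1 ↔ (q j : ℤ) ∣ m := by
  rw [rho_eq_zpow, (isPrimitiveRoot_rho_one hq).zpow_eq_one_iff_dvd]

theorem rho_eq_rho_iff (hq : 0 < q j) {m m' : ℤ} :
    rho d q j m = rho d q j m' ↔ m ≡ m' [ZMOD q j] := by
  rw [← sub_add_cancel m m', rho_add, mul_eq_right₀ (rho_ne_zero m'), rho_eq_one_iff hq,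
    sub_add_cancel, Int.modEq_comm, Int.modEq_iff_dvd]

theorem rho_pow_eq_one (hq : 0 < q j) (m : ℤ) : rho d q j m ^ q j = 1 := by
  rw [rho_eq_zpow, ← zpow_natCast, zpow_comm, zpow_natCast,
    (isPrimitiveRoot_rho_one hq).pow_eq_one, one_zpow]

theorem intCast_modEq_iff_eq {n m : Fin (q j)} :
    ((n : ℕ) : ℤ) ≡ ((m : ℕ) : ℤ) [ZMOD q j] ↔ n = m := by
  rw [Int.natCast_modEq_iff, Nat.ModEq, Nat.mod_eq_of_lt n.2, Nat.mod_eq_of_lt m.2, Fin.ext_iff]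

/-- The coefficient `ρ^j_{n_j}` of `z_j` in the `n`-th diagonal entry of the Floquet matrix. -/
def floquetWeight (d : ℕ) (q : Fin d → ℕ) (n : Cell d q) (j : Fin d) : ℂ :=
  rho d q j (n j : ℕ)

theorem floquetWeight_ne_zero (n : Cell d q) (j : Fin d) : floquetWeight d q n j ≠ 0 :=
  rho_ne_zero _

theorem exists_floquetWeight_mul_ne [Nontrivial (Fin d)] (hq : ∀ j, 0 < q j)
    (hco : Pairwise fun i j => (q i).Coprime (q j)) (i : Fin d) {n m : Cell d q} (hnm : n ≠ m) :
    ∃ j, floquetWeight d q n i * floquetWeight d q m j ≠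
      floquetWeight d q m i * floquetWeight d q n j := by
  by_contra! hall
  set u : (j : Fin d) → ℂ := fun j => rho d q j ((n j : ℕ) - (m j : ℕ) : ℤ) with hu
  have weight_n (j) : floquetWeight d q n j = u j * floquetWeight d q m j := by
    rw [hu, floquetWeight, floquetWeight, ← rho_add, sub_add_cancel]
  have hui (j) : u i = u j := by
    refine mul_right_cancel₀
      (mul_ne_zero (floquetWeight_ne_zero m i) (floquetWeight_ne_zero m j)) ?_
    linear_combination weight_n j * floquetWeight d q m i - weight_n i * floquetWeight d q m j
      + hall j
  have hone : u i = 1 := by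
    obtain ⟨j, hj⟩ := exists_ne i
    exact (pow_eq_one_iff_of_coprime (hco hj)).1
      ⟨hui j ▸ rho_pow_eq_one (hq j) _, rho_pow_eq_one (hq i) _⟩
  refine hnm (funext fun j => ?_)
  have hweight : floquetWeight d q n j = floquetWeight d q m j := by
    rw [weight_n, ← hui j, hone, one_mul]
  exact intCast_modEq_iff_eq.1 ((rho_eq_rho_iff (hq j)).1 hweight)

end RootsOfUnity

section Floquet
variable {d : ℕ} {q : Fin d → ℕ}

theorem dft_eq_sum_prod_rho (V : (Fin d → ℤ) → ℝ) (l : Fin d → ℤ) :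
    dft d q V l = (1 / ∏ j, (q j : ℂ)) * ∑ n : Cell d q, (V (fun j => ((n j : ℕ) : ℤ)) : ℂ) *
      ∏ j, (rho d q j (l j) ^ (n j : ℕ))⁻¹ := by
  rw [dft]
  congr! 4 with n
  rw [Finset.mul_sum, Complex.exp_sum]
  refine Finset.prod_congr rfl fun j _ => ?_
  rw [rho, ← Complex.exp_nat_mul, ← Complex.exp_neg]
  congr 1
  ring

theorem dft_congr (hq : ∀ j, 0 < q j) (V : (Fin d → ℤ) → ℝ) {l l' : Fin d → ℤ}
    (h : ∀ j, l j ≡ l' j [ZMOD q j]) : dft d q V l = dft d q V l' := by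
  simp only [dft_eq_sum_prod_rho, (rho_eq_rho_iff (hq _)).2 (h _)]

/-- The cyclic shift `n ↦ n + (1, …, 1)` of the periodicity cell. -/
def cellShift (d : ℕ) (q : Fin d → ℕ) : Equiv.Perm (Cell d q) :=
  Equiv.piCongrRight fun j => finRotate (q j)

theorem cellShift_modEq (n : Cell d q) (j : Fin d) :
    ((cellShift d q n j : ℕ) : ℤ) ≡ (n j : ℕ) + 1 [ZMOD q j] := by
  have key (N : ℕ) (k : Fin N) : ((finRotate N k : ℕ) : ℤ) ≡ (k : ℕ) + 1 [ZMOD N] := by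
    cases N with
    | zero => exact k.elim0
    | succ N =>
      rw [coe_finRotate]
      split_ifs with hk
      · simp [hk, Int.ModEq]
      · push_cast
        rfl
  exact key (q j) (n j)

theorem floquetWeight_cellShift (hq : ∀ j, 0 < q j) (n : Cell d q) (j : Fin d) :
    floquetWeight d q (cellShift d q n) j = rho d q j 1 * floquetWeight d q n j := by
  rw [floquetWeight, floquetWeight, ← rho_add, add_comm]
  exact (rho_eq_rho_iff (hq j)).2 (cellShift_modEq n j)

/-- The part of the Floquet matrix minus `λ` that does not depend on `z`. -/
def floquetConstPart (d : ℕ) (q : Fin d → ℕ) (V : (Fin d → ℤ) → ℝ) (lam : ℂ) :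
    Matrix (Cell d q) (Cell d q) ℂ :=
  Matrix.of (fun n n' => dft d q V (fun j => ((n j : ℕ) : ℤ) - ((n' j : ℕ) : ℤ))) - lam • 1

theorem floquetDet_eq_laurentDet (V : (Fin d → ℤ) → ℝ) (z : Fin d → ℂ) (lam : ℂ) :
    floquetDet d q V z lam =
      laurentDet (floquetWeight d q) (floquetConstPart d q V lam) z := by
  rw [floquetDet, laurentDet, floquetConstPart, ← add_sub_assoc]
  rfl

theorem submatrix_floquetConstPart_cellShift (hq : ∀ j, 0 < q j) (V : (Fin d → ℤ) → ℝ) (lam : ℂ) :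
    (floquetConstPart d q V lam).submatrix (cellShift d q) (cellShift d q) =
      floquetConstPart d q V lam := by
  ext n m
  have hdft := dft_congr hq V fun j =>
    ((cellShift_modEq n j).sub (cellShift_modEq m j)).trans (by rw [add_sub_add_right_eq_sub])
  simp only [floquetConstPart, Matrix.submatrix_apply, Matrix.sub_apply, Matrix.of_apply,
    Matrix.smul_apply, Matrix.one_apply, EmbeddingLike.apply_eq_iff_eq]
  rw [hdft]

end Floquet

theorem floquetDet_eq_of_zero_imp_of_one {q : Fin 1 → ℕ} (hq : ∀ j, 0 < q j)
    {V Y : (Fin 1 → ℤ) → ℝ} {lam mu : ℂ}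
    (h : ∀ z : Fin 1 → ℂ, (∀ j, z j ≠ 0) →
      floquetDet 1 q V z lam = 0 → floquetDet 1 q Y z mu = 0)
    {z : Fin 1 → ℂ} (hz : ∀ j, z j ≠ 0) : floquetDet 1 q V z lam = floquetDet 1 q Y z mu := by
  have : Nonempty (Cell 1 q) := ⟨fun j => ⟨0, hq j⟩⟩
  have hcard : Fintype.card (Cell 1 q) = q 0 := by simp
  simp only [floquetDet_eq_laurentDet] at h ⊢
  exact laurentDet_eq_of_zero_imp_of_unique (hcard ▸ isPrimitiveRoot_rho_one (hq 0))
    (floquetWeight_ne_zero · 0) (floquetWeight_cellShift hq · 0)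
    (submatrix_floquetConstPart_cellShift hq V lam)
    (submatrix_floquetConstPart_cellShift hq Y mu) h hz

theorem floquetDet_eq_of_zero_sets_eq_general {d : ℕ} (hd : 1 ≤ d)
    {q : Fin d → ℕ} (hq : ∀ j, 0 < q j) (hco : Pairwise fun i j => (q i).Coprime (q j))
    {V Y : (Fin d → ℤ) → ℝ} {lam mu : ℂ}
    (h : ∀ z : Fin d → ℂ, (∀ j, z j ≠ 0) →
      floquetDet d q V z lam = 0 → floquetDet d q Y z mu = 0)
    {z : Fin d → ℂ} (hz : ∀ j, z j ≠ 0) : floquetDet d q V z lam = floquetDet d q Y z mu := by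
  obtain rfl | hd2 := hd.eq_or_lt
  · exact floquetDet_eq_of_zero_imp_of_one hq h hz
  · have : Nontrivial (Fin d) := Fin.nontrivial_iff_two_le.2 hd2
    simp only [floquetDet_eq_laurentDet] at h ⊢
    exact laurentDet_eq_of_zero_imp floquetWeight_ne_zero
      (fun n m => exists_floquetWeight_mul_ne hq hco ⟨0, hd⟩) h hz

/-- Lemma 2.6: if the zero sets of `P̃_V(·, λ₀)` and `P̃_Y(·, λ₀)` on
`(ℂ∖{0})^d` coincide, then `P̃_V(z, λ₀) = P̃_Y(z, λ₀)` for all `z ∈ (ℂ∖{0})^d`. -/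
theorem floquetDet_eq_of_zero_sets_eq
    (d : ℕ) (hd : 1 ≤ d)
    (q : Fin d → ℕ) (hq : ∀ j, 0 < q j)
    (hco : ∀ i j : Fin d, i ≠ j → Nat.Coprime (q i) (q j))
    (V Y : (Fin d → ℤ) → ℝ)
    (hVper : IsPeriodicPotential d q V) (hYper : IsPeriodicPotential d q Y)
    (lam0 : ℂ)
    (hzeros : {z : Fin d → ℂ | (∀ j, z j ≠ 0) ∧ floquetDet d q V z lam0 = 0}
      = {z : Fin d → ℂ | (∀ j, z j ≠ 0) ∧ floquetDet d q Y z lam0 = 0}) :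
    ∀ z : Fin d → ℂ, (∀ j, z j ≠ 0) →
      floquetDet d q V z lam0 = floquetDet d q Y z lam0 := by
  intro z hz
  exact floquetDet_eq_of_zero_sets_eq_general hd hq (fun i j => hco i j)
    (fun w hw hV => (hzeros.subset ⟨hw, hV⟩).2) hz

end
end

section
/- Let d ≥ 2, let q_1, …, q_d be pairwise coprime positive integers, and let V : ℤ^d → ℝ be Γ-periodic. Fix r ≥ 2 and d_1,…,d_r ≥ 1 with d_1 + ⋯ + d_r = d. Then V is (d_1,…,d_r) separable if and only if V̂(l) = 0 for every l ∈ W such that at least two of the blocks l̃_1, …, l̃_r are nonzero (where l̃_j = (l_{d_1+⋯+d_{j−1}+1},…,l_{d_1+⋯+d_j}) is the j-th block of coordinates of l). -/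
open scoped BigOperators
open Complex

noncomputable section

/-! Characters separate variables: `e^{2πi Σ l_j n_j / q_j}` depends only on the coordinates of `n`
in the support of `l`, while the Fourier coefficient at `l` of a function that ignores some
coordinate `k` with `l_k ≠ 0` vanishes, since a unit shift in the direction `k` fixes the function
and multiplies the character by a constant different from `1`. Hence a sum of functions of single
blocks has no mixed frequencies, and conversely Fourier inversion writes a potential without mixed
frequencies as a sum of functions of single blocks. -/

section DependsOn

variable {ι κ : Type*}

lemma dependsOn_range_iff_exists_comp {α β : Type*} [Nonempty β] {f : (ι → α) → β} {e : κ → ι} :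
    DependsOn f (Set.range e) ↔ ∃ g : (κ → α) → β, ∀ x, f x = g (x ∘ e) := by
  have h_factors : DependsOn f (Set.range e) ↔ f.FactorsThrough fun x => x ∘ e := by
    simp only [DependsOn, Function.FactorsThrough, Set.forall_mem_range, funext_iff,
      Function.comp_apply]
  rw [h_factors, Function.factorsThrough_iff]
  simp only [funext_iff, Function.comp_apply]

variable {α : ι → Type*} {M : Type*} [Fintype κ] [AddCommMonoid M]

/-- `f` is a finite sum of functions, the `j`-th of which depends only on the coordinates in `s j`.
For `s` the blocks of a partition of the coordinates this is separability. -/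
def IsSumOfDependsOn (s : κ → Set ι) (f : (∀ i, α i) → M) : Prop :=
  ∃ U : κ → (∀ i, α i) → M, (∀ j, DependsOn (U j) (s j)) ∧ ∀ x, f x = ∑ j, U j x

namespace IsSumOfDependsOn

variable {s : κ → Set ι} {f g : (∀ i, α i) → M}

lemma zero : IsSumOfDependsOn s (0 : (∀ i, α i) → M) :=
  ⟨0, fun _ _ _ _ => rfl, fun _ => by simp⟩

lemma add (hf : IsSumOfDependsOn s f) (hg : IsSumOfDependsOn s g) :
    IsSumOfDependsOn s (f + g) := by
  obtain ⟨U, hU, hfU⟩ := hf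
  obtain ⟨T, hT, hgT⟩ := hg
  refine ⟨U + T, fun j x y hxy => ?_, fun x => ?_⟩
  · rw [Pi.add_apply, Pi.add_apply, Pi.add_apply, hU j hxy, hT j hxy]
  · simp only [Pi.add_apply, hfU, hgT, Finset.sum_add_distrib]

lemma sum {τ : Type*} {t : Finset τ} {F : τ → (∀ i, α i) → M}
    (hF : ∀ a ∈ t, IsSumOfDependsOn s (F a)) : IsSumOfDependsOn s (∑ a ∈ t, F a) :=
  Finset.sum_induction F (IsSumOfDependsOn s) (fun _ _ => add) zero hF

lemma of_dependsOn {j : κ} (hf : DependsOn f (s j)) : IsSumOfDependsOn s f := by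
  classical
  refine ⟨Pi.single j f, fun i => ?_, fun x => ?_⟩
  · obtain rfl | hij := eq_or_ne i j
    · rwa [Pi.single_eq_same]
    · rw [Pi.single_eq_of_ne hij]
      exact fun _ _ _ => rfl
  · rw [Fintype.sum_eq_single j fun i hij => by rw [Pi.single_eq_of_ne hij, Pi.zero_apply],
      Pi.single_eq_same]

end IsSumOfDependsOn

end DependsOn

section Blocks

lemma exists_two_blocks_iff {κ ι : Type*} [Nonempty κ] {β : κ → Type*} {e : ∀ j, β j → ι}
    (he : Function.Bijective fun x : Σ j, β j => e x.1 x.2) (p : ι → Prop) :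
    (∃ j₁ j₂, j₁ ≠ j₂ ∧ (∃ i, p (e j₁ i)) ∧ ∃ i, p (e j₂ i)) ↔
      ∀ j, ∃ k ∉ Set.range (e j), p k := by
  have h_disjoint : ∀ {j j'} (i : β j), j ≠ j' → e j i ∉ Set.range (e j') := by
    rintro j j' i hj ⟨i', hi'⟩
    have h_eq := he.injective (a₁ := ⟨j', i'⟩) (a₂ := ⟨j, i⟩) hi'
    exact hj (congrArg Sigma.fst h_eq).symm
  constructor
  · rintro ⟨j₁, j₂, hne, ⟨i₁, hi₁⟩, ⟨i₂, hi₂⟩⟩ j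
    obtain rfl | hj := eq_or_ne j₁ j
    · exact ⟨_, h_disjoint i₂ hne.symm, hi₂⟩
    · exact ⟨_, h_disjoint i₁ hj, hi₁⟩
  · intro h
    obtain ⟨k₁, -, hk₁⟩ := h (Classical.arbitrary κ)
    obtain ⟨⟨j₁, i₁⟩, rfl⟩ := he.surjective k₁
    obtain ⟨k₂, hk₂_notMem, hk₂⟩ := h j₁
    obtain ⟨⟨j₂, i₂⟩, rfl⟩ := he.surjective k₂
    refine ⟨j₁, j₂, ?_, ⟨i₁, hk₁⟩, ⟨i₂, hk₂⟩⟩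
    rintro rfl
    exact hk₂_notMem ⟨i₂, rfl⟩

variable {r d : ℕ} {D : Fin r → ℕ} (hsum : ∑ j, D j = d)

lemma blockEmbed_eq_cast_finSigmaFinEquiv (j : Fin r) (i : Fin (D j)) :
    blockEmbed D hsum j i = Fin.cast hsum (finSigmaFinEquiv ⟨j, i⟩) := by
  have h_filter : Finset.univ.filter (· < j) =
      Finset.univ.map (Fin.castLEEmb j.isLt.le) := by
    ext k
    simp only [Finset.mem_filter, Finset.mem_univ, true_and, Finset.mem_map, Fin.castLEEmb_apply]
    exact ⟨fun hk => ⟨⟨k, hk⟩, rfl⟩, by rintro ⟨i, rfl⟩; exact i.isLt⟩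
  apply Fin.ext
  simp only [blockEmbed, h_filter, Finset.sum_map, Fin.castLEEmb_apply, Fin.val_cast,
    finSigmaFinEquiv_apply]

lemma blockEmbed_bijective :
    Function.Bijective fun x : Σ j, Fin (D j) => blockEmbed D hsum x.1 x.2 := by
  simp only [blockEmbed_eq_cast_finSigmaFinEquiv]
  exact (finSigmaFinEquiv.trans (finCongr hsum)).bijective

lemma isSeparablePotential_iff_isSumOfDependsOn {V : (Fin d → ℤ) → ℝ} :
    IsSeparablePotential d D hsum V ↔
      IsSumOfDependsOn (fun j => Set.range (blockEmbed D hsum j)) V := by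
  simp only [IsSumOfDependsOn, dependsOn_range_iff_exists_comp]
  constructor
  · rintro ⟨Vj, hV⟩
    exact ⟨fun j n => Vj j (n ∘ blockEmbed D hsum j), fun j => ⟨Vj j, fun _ => rfl⟩, hV⟩
  · rintro ⟨U, hU, hV⟩
    choose Vj hVj using hU
    exact ⟨Vj, fun n => (hV n).trans (Finset.sum_congr rfl fun j _ => hVj j n)⟩

end Blocks

section Characters

lemma sum_mul_addChar_eq_zero {G R : Type*} [AddGroup G] [Fintype G] [Semiring R] [IsDomain R]
    {ψ : AddChar G R} {f : G → R} {a : G} (hf : ∀ x, f (x + a) = f x) (hψ : ψ a ≠ 1) :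
    ∑ x, f x * ψ x = 0 := by
  have h_shift : (∑ x, f x * ψ x) * ψ a = ∑ x, f x * ψ x :=
    calc (∑ x, f x * ψ x) * ψ a
        = ∑ x, f (x + a) * ψ (x + a) := by
          simp only [Finset.sum_mul, hf, AddChar.map_add_eq_mul, mul_assoc]
      _ = ∑ x, f x * ψ x := Equiv.sum_comp (Equiv.addRight a) fun x => f x * ψ x
  by_contra h_ne
  exact hψ ((mul_eq_left₀ h_ne).mp h_shift)

variable {ι : Type*} [Fintype ι] (q : ι → ℕ)

/-- The character `n ↦ e^{2πi Σ l_j n_j / q_j}` of `ℤ^ι`. -/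
def latticeChar (l : ι → ℤ) : AddChar (ι → ℤ) ℂ where
  toFun n := exp (2 * Real.pi * I * ∑ j, (l j : ℂ) * (n j : ℂ) / (q j : ℂ))
  map_zero_eq_one' := by simp
  map_add_eq_mul' m n := by
    simp only [Pi.add_apply, Int.cast_add, mul_add, add_div, Finset.sum_add_distrib, exp_add]

lemma latticeChar_apply (l n : ι → ℤ) : latticeChar q l n =
    exp (2 * Real.pi * I * ∑ j, (l j : ℂ) * (n j : ℂ) / (q j : ℂ)) := rfl

lemma latticeChar_comm (l n : ι → ℤ) : latticeChar q l n = latticeChar q n l := by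
  simp only [latticeChar_apply, mul_comm]

lemma dependsOn_latticeChar {l : ι → ℤ} {s : Set ι} (hl : ∀ k ∉ s, l k = 0) :
    DependsOn (latticeChar q l) s := by
  intro m n hmn
  simp only [latticeChar_apply]
  congr 2
  refine Finset.sum_congr rfl fun k _ => ?_
  by_cases hk : k ∈ s
  · rw [hmn k hk]
  · simp only [hl k hk, Int.cast_zero, zero_mul]

variable {q} [∀ j, NeZero (q j)]

lemma latticeChar_single_eq_one_iff [DecidableEq ι] (l : ι → ℤ) (k : ι) :
    latticeChar q l (Pi.single k 1) = 1 ↔ (q k : ℤ) ∣ l k := by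
  have h_pow : latticeChar q l (Pi.single k 1) = exp (2 * Real.pi * I / q k) ^ l k := by
    rw [latticeChar_apply, ← exp_int_mul, Finset.sum_eq_single k]
    · rw [Pi.single_eq_same, Int.cast_one]
      ring_nf
    · intro j _ hjk
      simp only [Pi.single_eq_of_ne hjk, Int.cast_zero, mul_zero, zero_div]
    · exact fun hk => absurd (Finset.mem_univ k) hk
  rw [h_pow, (isPrimitiveRoot_exp (q k) (NeZero.ne _)).zpow_eq_one_iff_dvd]

lemma latticeChar_eq_one_of_dvd {l n : ι → ℤ} (hn : ∀ j, (q j : ℤ) ∣ n j) :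
    latticeChar q l n = 1 := by
  choose c hc using hn
  rw [latticeChar_apply, exp_eq_one_iff]
  refine ⟨∑ j, l j * c j, ?_⟩
  rw [mul_comm, Int.cast_sum]
  congr 1
  refine Finset.sum_congr rfl fun j _ => ?_
  have hq : (q j : ℂ) ≠ 0 := NeZero.ne _
  rw [hc j]
  push_cast
  field_simp

lemma latticeChar_congr {l m n : ι → ℤ} (hmn : ∀ j, m j ≡ n j [ZMOD q j]) :
    latticeChar q l m = latticeChar q l n := by
  have h_period : latticeChar q l (n - m) = 1 := latticeChar_eq_one_of_dvd fun j => (hmn j).dvd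
  rw [← sub_add_cancel n m, AddChar.map_add_eq_mul, h_period, one_mul]

end Characters

section Cell

variable {d : ℕ} {q : Fin d → ℕ}

/-- The inclusion of the fundamental domain `W` in `ℤ^d`. -/
def Cell.toInt (n : Cell d q) : Fin d → ℤ := fun j => ((n j : ℕ) : ℤ)

lemma Cell.eq_of_modEq {m n : Cell d q} (h : ∀ j, m.toInt j ≡ n.toInt j [ZMOD q j]) : m = n :=
  funext fun j => Fin.ext <|
    (Int.natCast_modEq_iff.mp (h j)).eq_of_lt_of_lt (m j).isLt (n j).isLt

lemma Cell.dvd_toInt_iff (l : Cell d q) (k : Fin d) : (q k : ℤ) ∣ l.toInt k ↔ (l k : ℕ) = 0 :=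
  Int.natCast_dvd_natCast.trans
    ⟨fun h => Nat.eq_zero_of_dvd_of_lt h (l k).isLt, fun h => h ▸ dvd_zero _⟩

lemma Cell.toInt_add_modEq (m n : Cell d q) (j : Fin d) :
    (m + n).toInt j ≡ m.toInt j + n.toInt j [ZMOD q j] := by
  simp only [Cell.toInt, Pi.add_apply, Fin.val_add, Int.natCast_mod, Nat.cast_add]
  exact Int.mod_modEq _ _

variable [∀ j, NeZero (q j)]

lemma exists_cell_modEq (n : Fin d → ℤ) : ∃ m : Cell d q, ∀ j, m.toInt j ≡ n j [ZMOD q j] := by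
  have h_residue : ∀ j, ∃ z : ℕ, (z : ℤ) < q j ∧ (z : ℤ) ≡ n j [ZMOD q j] := fun j =>
    Int.existsUnique_equiv_nat (n j) (Nat.cast_pos.mpr (NeZero.pos (q j)))
  choose z hz_lt hz using h_residue
  exact ⟨fun j => ⟨z j, Nat.cast_lt.mp (hz_lt j)⟩, hz⟩

lemma Cell.toInt_single_modEq (k j : Fin d) :
    Cell.toInt (Pi.single k 1 : Cell d q) j ≡ (Pi.single k 1 : Fin d → ℤ) j [ZMOD q j] := by
  obtain rfl | hjk := eq_or_ne j k
  · simp only [Cell.toInt, Pi.single_eq_same, Fin.val_one', Int.natCast_mod, Nat.cast_one]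
    exact Int.mod_modEq _ _
  · simp only [Cell.toInt, Pi.single_eq_of_ne hjk, Fin.val_zero, Nat.cast_zero, Int.ModEq.refl]

variable (q) in
/-- The character `n ↦ e^{2πi Σ l_j n_j / q_j}` of `W`, with `W` identified with `ℤ^d / Γ` as a
group by the modular addition on each `Fin (q j)`. -/
def cellChar (l : Fin d → ℤ) : AddChar (Cell d q) ℂ where
  toFun n := latticeChar q l n.toInt
  map_zero_eq_one' := latticeChar_eq_one_of_dvd fun j => by simp [Cell.toInt]
  map_add_eq_mul' m n := by
    rw [← AddChar.map_add_eq_mul]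
    exact latticeChar_congr (Cell.toInt_add_modEq m n)

lemma cellChar_apply (l : Fin d → ℤ) (n : Cell d q) :
    cellChar q l n = latticeChar q l n.toInt := rfl

lemma cellChar_single_eq_one_iff (l : Fin d → ℤ) (k : Fin d) :
    cellChar q l (Pi.single k 1) = 1 ↔ (q k : ℤ) ∣ l k := by
  rw [cellChar_apply, latticeChar_congr (Cell.toInt_single_modEq k),
    latticeChar_single_eq_one_iff]

lemma cellChar_eq_zero_iff {l : Fin d → ℤ} : cellChar q l = 0 ↔ ∀ j, (q j : ℤ) ∣ l j := by
  refine ⟨fun h j => ?_, fun h => AddChar.eq_zero_iff.mpr fun n => ?_⟩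
  · rw [← cellChar_single_eq_one_iff, h, AddChar.zero_apply]
  · rw [cellChar_apply, latticeChar_comm, latticeChar_eq_one_of_dvd h]

lemma sum_latticeChar_div_latticeChar (m n : Cell d q) :
    ∑ l : Cell d q, latticeChar q l.toInt m.toInt / latticeChar q l.toInt n.toInt =
      if n = m then ∏ j, (q j : ℂ) else 0 := by
  classical
  have h_zero : cellChar q (m.toInt - n.toInt) = 0 ↔ n = m := by
    rw [cellChar_eq_zero_iff]
    refine ⟨fun h => Cell.eq_of_modEq fun j => Int.modEq_iff_dvd.mpr (h j), ?_⟩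
    rintro rfl
    simp
  calc ∑ l : Cell d q, latticeChar q l.toInt m.toInt / latticeChar q l.toInt n.toInt
      = ∑ l : Cell d q, cellChar q (m.toInt - n.toInt) l := by
        simp only [← AddChar.map_sub_eq_div, cellChar_apply, latticeChar_comm q (m.toInt - n.toInt)]
    _ = if n = m then ∏ j, (q j : ℂ) else 0 := by
        rw [AddChar.sum_eq_ite, Fintype.card_pi]
        simp only [h_zero, Fintype.card_fin, Nat.cast_prod]

end Cell

section FourierTransform

variable {d : ℕ} {q : Fin d → ℕ}

lemma dft_eq_sum_div_latticeChar (V : (Fin d → ℤ) → ℝ) (l : Fin d → ℤ) :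
    dft d q V l = (1 / ∏ j, (q j : ℂ)) *
      ∑ n : Cell d q, (V n.toInt : ℂ) / latticeChar q l n.toInt := by
  unfold dft Cell.toInt
  simp only [latticeChar_apply, neg_mul, exp_neg, ← div_eq_mul_inv, Int.cast_natCast]

lemma dft_sum {κ : Type*} (t : Finset κ) (U : κ → (Fin d → ℤ) → ℝ) (l : Fin d → ℤ) :
    dft d q (fun n => ∑ j ∈ t, U j n) l = ∑ j ∈ t, dft d q (U j) l := by
  simp only [dft_eq_sum_div_latticeChar, ofReal_sum, Finset.sum_div, ← Finset.mul_sum]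
  rw [Finset.sum_comm]

lemma IsPeriodicPotential.congr {V : (Fin d → ℤ) → ℝ} (hV : IsPeriodicPotential d q V)
    {m n : Fin d → ℤ} (hmn : ∀ j, m j ≡ n j [ZMOD q j]) : V m = V n := by
  rw [← hV m (n - m) fun j => (hmn j).dvd, add_sub_cancel]

variable [∀ j, NeZero (q j)]

lemma dft_eq_zero_of_dependsOn {V : (Fin d → ℤ) → ℝ} {s : Set (Fin d)} (hV : DependsOn V s)
    {k : Fin d} (hk : k ∉ s) {l : Fin d → ℤ} (hl : ¬ (q k : ℤ) ∣ l k) : dft d q V l = 0 := by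
  have h_invariant : ∀ n : Cell d q, V (Cell.toInt (n + Pi.single k 1)) = V n.toInt := by
    refine fun n => hV fun j hj => ?_
    have hjk : j ≠ k := ne_of_mem_of_not_mem hj hk
    simp only [Cell.toInt, Pi.add_apply, Pi.single_eq_of_ne hjk, add_zero]
  have h_nontrivial : (cellChar q l)⁻¹ (Pi.single k 1) ≠ 1 := by
    rwa [AddChar.inv_apply', inv_ne_one, Ne, cellChar_single_eq_one_iff]
  have h_sum := sum_mul_addChar_eq_zero (f := fun n : Cell d q => (V n.toInt : ℂ))
    (fun n => congrArg _ (h_invariant n)) h_nontrivial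
  simp only [AddChar.inv_apply', ← div_eq_mul_inv, cellChar_apply] at h_sum
  rw [dft_eq_sum_div_latticeChar, h_sum, mul_zero]

lemma sum_dft_mul_latticeChar_toInt (V : (Fin d → ℤ) → ℝ) (m : Cell d q) :
    ∑ l : Cell d q, dft d q V l.toInt * latticeChar q l.toInt m.toInt = V m.toInt := by
  have hQ : (∏ j, (q j : ℂ)) ≠ 0 := Finset.prod_ne_zero_iff.mpr fun j _ => NeZero.ne _
  calc ∑ l : Cell d q, dft d q V l.toInt * latticeChar q l.toInt m.toInt
      = (1 / ∏ j, (q j : ℂ)) * ∑ n : Cell d q, (V n.toInt : ℂ) *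
          ∑ l : Cell d q, latticeChar q l.toInt m.toInt / latticeChar q l.toInt n.toInt := by
        simp only [dft_eq_sum_div_latticeChar, Finset.mul_sum, Finset.sum_mul]
        rw [Finset.sum_comm]
        refine Finset.sum_congr rfl fun n _ => Finset.sum_congr rfl fun l _ => ?_
        ring
    _ = V m.toInt := by
        simp only [sum_latticeChar_div_latticeChar, mul_ite, mul_zero, Finset.sum_ite_eq',
          Finset.mem_univ, if_true]
        field_simp

theorem sum_dft_mul_latticeChar {V : (Fin d → ℤ) → ℝ} (hV : IsPeriodicPotential d q V)
    (n : Fin d → ℤ) :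
    ∑ l : Cell d q, dft d q V l.toInt * latticeChar q l.toInt n = V n := by
  obtain ⟨m, hm⟩ := exists_cell_modEq (q := q) n
  simp only [← hV.congr hm, ← latticeChar_congr hm, sum_dft_mul_latticeChar_toInt]

lemma isSumOfDependsOn_of_dft_eq_zero {κ : Type*} [Fintype κ] {s : κ → Set (Fin d)}
    {V : (Fin d → ℤ) → ℝ} (hV : IsPeriodicPotential d q V)
    (h : ∀ l : Cell d q, (∀ j, ∃ k ∉ s j, (l k : ℕ) ≠ 0) → dft d q V l.toInt = 0) :
    IsSumOfDependsOn s V := by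
  have h_inversion : V = ∑ l : Cell d q, fun n =>
      (dft d q V l.toInt * latticeChar q l.toInt n).re := by
    funext n
    rw [Finset.sum_apply, ← re_sum, sum_dft_mul_latticeChar hV, ofReal_re]
  rw [h_inversion]
  refine IsSumOfDependsOn.sum fun l _ => ?_
  by_cases h_mixed : ∀ j, ∃ k ∉ s j, (l k : ℕ) ≠ 0
  · simp only [h l h_mixed, zero_mul, zero_re]
    exact IsSumOfDependsOn.zero
  · push Not at h_mixed
    obtain ⟨j, hj⟩ := h_mixed
    have h_char : DependsOn (latticeChar q l.toInt) (s j) :=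
      dependsOn_latticeChar q fun k hk => Nat.cast_eq_zero.mpr (hj k hk)
    exact IsSumOfDependsOn.of_dependsOn fun m n hmn => by rw [h_char hmn]

theorem separable_iff_dft_vanishes_on_mixed_frequencies_general
    {κ : Type*} [Fintype κ] (s : κ → Set (Fin d))
    {V : (Fin d → ℤ) → ℝ} (hV : IsPeriodicPotential d q V) :
    IsSumOfDependsOn s V ↔
      ∀ l : Cell d q, (∀ j, ∃ k ∉ s j, (l k : ℕ) ≠ 0) → dft d q V l.toInt = 0 := by
  refine ⟨?_, isSumOfDependsOn_of_dft_eq_zero hV⟩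
  rintro ⟨U, hU, hVU⟩ l h_mixed
  rw [funext hVU, dft_sum]
  refine Finset.sum_eq_zero fun j _ => ?_
  obtain ⟨k, hk, hlk⟩ := h_mixed j
  exact dft_eq_zero_of_dependsOn (hU j) hk (mt (l.dvd_toInt_iff k).mp hlk)

end FourierTransform

/-- Lemma 3.1: `V` is `(d₁,…,d_r)` separable iff `V̂(l) = 0` for every
`l ∈ W` for which at least two blocks of coordinates of `l` are nonzero. -/
theorem separable_iff_dft_vanishes_on_mixed_frequencies
    (d r : ℕ) (hd : 2 ≤ d) (hr : 2 ≤ r)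
    (q : Fin d → ℕ) (hq : ∀ j, 0 < q j)
    (hco : ∀ i j : Fin d, i ≠ j → Nat.Coprime (q i) (q j))
    (D : Fin r → ℕ) (hD : ∀ j, 1 ≤ D j) (hsum : ∑ j, D j = d)
    (V : (Fin d → ℤ) → ℝ)
    (hVper : IsPeriodicPotential d q V) :
    IsSeparablePotential d D hsum V ↔
      ∀ l : Cell d q,
        (∃ j₁ j₂ : Fin r, j₁ ≠ j₂ ∧
          (∃ i : Fin (D j₁), (l (blockEmbed D hsum j₁ i) : ℕ) ≠ 0) ∧
          (∃ i : Fin (D j₂), (l (blockEmbed D hsum j₂ i) : ℕ) ≠ 0)) →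
        dft d q V (fun j => ((l j : ℕ) : ℤ)) = 0 := by
  have : ∀ j, NeZero (q j) := fun j => ⟨(hq j).ne'⟩
  have : Nonempty (Fin r) := ⟨⟨0, by omega⟩⟩
  rw [isSeparablePotential_iff_isSumOfDependsOn,
    separable_iff_dft_vanishes_on_mixed_frequencies_general _ hVper]
  exact forall_congr' fun l => imp_congr_left
    (exists_two_blocks_iff (blockEmbed_bijective hsum) fun k => (l k : ℕ) ≠ 0).symm

end
end

section
/- Let q_1, q_2, q_3 be pairwise coprime positive integers, and for j = 1,2,3 write ρ^j_m = e^{2πi m/q_j}. Suppose l_j, l_j′ ∈ {0,1,…,q_j−1} for j = 1,2,3 satisfy det [[1, 1, 1], [ρ^1_{l_1}, ρ^2_{l_2}, ρ^3_{l_3}], [ρ^1_{l_1′}, ρ^2_{l_2′}, ρ^3_{l_3′}]] = 0. Then at least one of the following holds: (i) l_1 = l_2 = l_3 = 0; (ii) l_1′ = l_2′ = l_3′ = 0; (iii) l_1 = l_1′, l_2 = l_2′ and l_3 = l_3′; (iv) l_1 = l_1′ = 0 and l_2 = l_2′ = 0; (v) l_1 = l_1′ = 0 and l_3 = l_3′ =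 0; (vi) l_2 = l_2′ = 0 and l_3 = l_3′ = 0. -/
open scoped BigOperators
open Complex

/-!
For points `a`, `b`, `c` on the unit circle, complex conjugation is inversion, so it multiplies the
ratio of chords `(b - a) / (c - a)` by `c / b`. The determinant vanishes exactly when this ratio is
the same for both rows `(a, b, c)` and `(a', b', c')`. If the ratio is neither `0` nor undefined,
conjugating therefore gives `c / b = c' / b'`, that is `b' / b = c' / c`; the orders of `b' / b`
and `c' / c` are coprime, so both ratios are `1` and the determinant reduces to
`(a - a') * (b - c)`. All remaining cases other than `a = a'` are coincidences between entries of
coprime orders, which force these entries to be `1`.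
-/

section Coprime

variable {m n : ℕ}

theorem eq_one_and_eq_one_of_pow_eq_one_of_coprime {M : Type*} [Monoid M] {x y : M}
    (hmn : m.Coprime n) (hx : x ^ m = 1) (hy : y ^ n = 1) (hxy : x = y) : x = 1 ∧ y = 1 := by
  subst hxy
  have hx_one : x = 1 := (pow_eq_one_iff_of_coprime hmn).1 ⟨hx, hy⟩
  exact ⟨hx_one, hx_one⟩

theorem eq_and_eq_of_mul_eq_mul_of_pow_eq_one_of_coprime {G : Type*} [CommGroup G] {b b' c c' : G}
    (hmn : m.Coprime n) (hb : b ^ m = 1) (hb' : b' ^ m = 1) (hc : c ^ n = 1) (hc' : c' ^ n = 1)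
    (h : b * c' = c * b') : b = b' ∧ c = c' := by
  have hdiv : b / b' = c / c' := div_eq_div_iff_mul_eq_mul.2 h
  obtain ⟨hb_one, hc_one⟩ := eq_one_and_eq_one_of_pow_eq_one_of_coprime hmn
    (by rw [div_pow, hb, hb', div_one]) (by rw [div_pow, hc, hc', div_one]) hdiv
  exact ⟨div_eq_one.1 hb_one, div_eq_one.1 hc_one⟩

end Coprime

theorem det_ones_row_eq_zero_iff {R : Type*} [CommRing R] {a b c a' b' c' : R} :
    Matrix.det !![1, 1, 1; a, b, c; a', b', c'] = 0 ↔
      (b - a) * (c' - a') = (c - a) * (b' - a') := by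
  have hdet : Matrix.det !![1, 1, 1; a, b, c; a', b', c'] =
      (b - a) * (c' - a') - (c - a) * (b' - a') := by
    simp only [Matrix.det_fin_three, Matrix.of_apply, Matrix.cons_val', Matrix.cons_val_fin_one,
      Matrix.cons_val, one_mul]
    ring
  rw [hdet, sub_eq_zero]

section Unitary

variable {R : Type*} [CommRing R] [StarRing R]

theorem star_coe_sub_coe_mul (a b : unitary R) : star (b - a : R) * (a * b) = a - b := by
  rw [star_sub]
  linear_combination (a : R) * Unitary.coe_star_mul_self b - (b : R) * Unitary.coe_star_mul_self a

variable [NoZeroDivisors R]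

theorem unitary_mul_eq_mul_of_sub_mul_sub_eq {a b c a' b' c' : unitary R}
    (h : (b - a : R) * (c' - a') = (c - a) * (b' - a'))
    (h_ne : (b - a : R) * (c' - a') ≠ 0) : b * c' = c * b' := by
  have hstar : star (b - a : R) * star (c' - a' : R) = star (c - a : R) * star (b' - a' : R) := by
    simpa only [star_mul'] using congrArg star h
  have hinv : (a - b : R) * (a' - c') * (c * b') = (a - c) * (a' - b') * (b * c') := by
    rw [← star_coe_sub_coe_mul a b, ← star_coe_sub_coe_mul a' c', ← star_coe_sub_coe_mul a c,
      ← star_coe_sub_coe_mul a' b']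
    linear_combination (a * b * c * a' * b' * c' : R) * hstar
  refine Subtype.ext (mul_left_cancel₀ h_ne ?_)
  push_cast
  linear_combination (b * c' : R) * h - hinv

theorem roots_of_unity_det_vanishing_cases_general {k m n : ℕ}
    (hkm : k.Coprime m) (hkn : k.Coprime n) (hmn : m.Coprime n) {a b c a' b' c' : unitary R}
    (ha : a ^ k = 1) (ha' : a' ^ k = 1) (hb : b ^ m = 1) (hb' : b' ^ m = 1)
    (hc : c ^ n = 1) (hc' : c' ^ n = 1)
    (hdet : Matrix.det !![(1 : R), 1, 1; (a : R), b, c; (a' : R), b', c'] = 0) :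
    (a = 1 ∧ b = 1 ∧ c = 1) ∨
    (a' = 1 ∧ b' = 1 ∧ c' = 1) ∨
    (a = a' ∧ b = b' ∧ c = c') ∨
    (a = 1 ∧ a' = 1 ∧ b = 1 ∧ b' = 1) ∨
    (a = 1 ∧ a' = 1 ∧ c = 1 ∧ c' = 1) ∨
    (b = 1 ∧ b' = 1 ∧ c = 1 ∧ c' = 1) := by
  have hchord := det_ones_row_eq_zero_iff.1 hdet
  by_cases hzero : (b - a : R) * (c' - a') = 0
  · have hba := eq_one_and_eq_one_of_pow_eq_one_of_coprime hkm.symm hb ha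
    have hba' := eq_one_and_eq_one_of_pow_eq_one_of_coprime hkm.symm hb' ha'
    have hca := eq_one_and_eq_one_of_pow_eq_one_of_coprime hkn.symm hc ha
    have hca' := eq_one_and_eq_one_of_pow_eq_one_of_coprime hkn.symm hc' ha'
    have hzero' := hchord.symm.trans hzero
    simp only [mul_eq_zero, sub_eq_zero, SetLike.coe_eq_coe] at hzero hzero'
    tauto
  · obtain ⟨rfl, rfl⟩ := eq_and_eq_of_mul_eq_mul_of_pow_eq_one_of_coprime hmn hb hb' hc hc'
      (unitary_mul_eq_mul_of_sub_mul_sub_eq hchord hzero)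
    have hsplit : (a - a' : R) * (b - c) = 0 := by linear_combination hchord
    have hbc := eq_one_and_eq_one_of_pow_eq_one_of_coprime hmn hb hc
    simp only [mul_eq_zero, sub_eq_zero, SetLike.coe_eq_coe] at hsplit
    tauto

end Unitary

section RootOfUnity

/-- The root of unity `ρ^q_l = exp (2πil/q)` of the paper, as a unitary complex number. Since
division by zero yields zero, `rootOfUnity 0 l = 1`. -/
noncomputable def rootOfUnity (q l : ℕ) : unitary ℂ :=
  ⟨exp (2 * Real.pi * I * l / q), by
    have harg : 2 * Real.pi * I * l / q = ((2 * Real.pi * l / q : ℝ) : ℂ) * I := by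
      push_cast
      ring
    rw [Unitary.mem_iff_star_mul_self, harg, star_def, conj_mul', norm_exp_ofReal_mul_I]
    norm_num⟩

variable {q l m : ℕ}

theorem coe_rootOfUnity (q l : ℕ) :
    (rootOfUnity q l : ℂ) = exp (2 * Real.pi * I / q) ^ l := by
  rw [← exp_nat_mul]
  exact congrArg exp (by ring)

theorem rootOfUnity_zero_right (q : ℕ) : rootOfUnity q 0 = 1 :=
  Subtype.ext (by rw [coe_rootOfUnity, pow_zero, OneMemClass.coe_one])

theorem rootOfUnity_pow_self (q l : ℕ) : rootOfUnity q l ^ q = 1 := by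
  obtain rfl | hq := eq_or_ne q 0
  · exact pow_zero _
  · refine Subtype.ext ?_
    rw [SubmonoidClass.coe_pow, coe_rootOfUnity, ← pow_mul, mul_comm l, pow_mul,
      (isPrimitiveRoot_exp q hq).pow_eq_one, one_pow, OneMemClass.coe_one]

theorem rootOfUnity_inj (hl : l < q) (hm : m < q) : rootOfUnity q l = rootOfUnity q m ↔ l = m := by
  refine ⟨fun h => (isPrimitiveRoot_exp q hl.ne_bot).pow_inj hl hm ?_, congrArg _⟩
  simpa only [coe_rootOfUnity] using congrArg Subtype.val h

theorem rootOfUnity_eq_one_iff (hl : l < q) : rootOfUnity q l = 1 ↔ l = 0 := by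
  rw [← rootOfUnity_zero_right q, rootOfUnity_inj hl (Nat.zero_lt_of_lt hl)]

end RootOfUnity

/-- Lemma 3.2: if `q₁, q₂, q₃` are pairwise coprime and the determinant of
the matrix `[[1,1,1], [ρ¹_{l₁}, ρ²_{l₂}, ρ³_{l₃}], [ρ¹_{l₁'}, ρ²_{l₂'}, ρ³_{l₃'}]]` of roots
of unity vanishes, then `(l₁,l₂,l₃)` and `(l₁',l₂',l₃')` fall into one of six cases. -/
theorem roots_of_unity_det_vanishing_cases
    (q1 q2 q3 : ℕ) (hq1 : 0 < q1) (hq2 : 0 < q2) (hq3 : 0 < q3)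
    (h12 : Nat.Coprime q1 q2) (h13 : Nat.Coprime q1 q3) (h23 : Nat.Coprime q2 q3)
    (l1 l1' l2 l2' l3 l3' : ℕ)
    (hl1 : l1 < q1) (hl1' : l1' < q1) (hl2 : l2 < q2) (hl2' : l2' < q2)
    (hl3 : l3 < q3) (hl3' : l3' < q3)
    (hdet : Matrix.det
      !![(1 : ℂ), 1, 1;
         Complex.exp (2 * Real.pi * Complex.I * (l1 : ℂ) / (q1 : ℂ)),
           Complex.exp (2 * Real.pi * Complex.I * (l2 : ℂ) / (q2 : ℂ)),
           Complex.exp (2 * Real.pi * Complex.I * (l3 : ℂ) / (q3 : ℂ));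
         Complex.exp (2 * Real.pi * Complex.I * (l1' : ℂ) / (q1 : ℂ)),
           Complex.exp (2 * Real.pi * Complex.I * (l2' : ℂ) / (q2 : ℂ)),
           Complex.exp (2 * Real.pi * Complex.I * (l3' : ℂ) / (q3 : ℂ))] = 0) :
    (l1 = 0 ∧ l2 = 0 ∧ l3 = 0) ∨
    (l1' = 0 ∧ l2' = 0 ∧ l3' = 0) ∨
    (l1 = l1' ∧ l2 = l2' ∧ l3 = l3') ∨
    (l1 = 0 ∧ l1' = 0 ∧ l2 = 0 ∧ l2' = 0) ∨
    (l1 = 0 ∧ l1' = 0 ∧ l3 = 0 ∧ l3' = 0) ∨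
    (l2 = 0 ∧ l2' = 0 ∧ l3 = 0 ∧ l3' = 0) := by
  simpa only [rootOfUnity_eq_one_iff hl1, rootOfUnity_eq_one_iff hl1', rootOfUnity_eq_one_iff hl2,
    rootOfUnity_eq_one_iff hl2', rootOfUnity_eq_one_iff hl3, rootOfUnity_eq_one_iff hl3',
    rootOfUnity_inj hl1 hl1', rootOfUnity_inj hl2 hl2', rootOfUnity_inj hl3 hl3'] using
    roots_of_unity_det_vanishing_cases_general h12 h13 h23
      (rootOfUnity_pow_self q1 l1) (rootOfUnity_pow_self q1 l1')
      (rootOfUnity_pow_self q2 l2) (rootOfUnity_pow_self q2 l2')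
      (rootOfUnity_pow_self q3 l3) (rootOfUnity_pow_self q3 l3') hdet
end

section
/- Let d ≥ 2, let q_1, …, q_d be pairwise coprime positive integers, and let V, Y : ℤ^d → ℝ be Γ-periodic potentials that are Fermi isospectral. Then [V] = [Y], i.e., V and Y have the same average over a periodicity cell. -/
open scoped BigOperators
open Complex

noncomputable section

/-!
Put `z = α / ε + s` with `∑ j, α j = 0` and multiply by `ε` every row of the Floquet matrix except
the one indexed by `0`. Because the phases `ρ` of row `0` are all `1`, the `1 / ε` terms cancel
there, and the rescaled determinant extends analytically to `ε = 0`, where it equals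
`(d * s + [V] - lam) * ∏ n ≠ 0, ∑ j, ρ n j * α j`. Since the `q j` have no common factor, the phases
of every other row are not constant, so a generic `α` makes the product nonzero. The implicit
function theorem then gives points of the Fermi variety of `V` with `ε → 0` and
`s → (lam - [V]) / d`. They also lie on the Fermi variety of `Y`, so by continuity the limit
`(lam - [V]) / d` is the root for `Y` as well.
-/

section TopologicalField

open Filter Topology

lemma frequently_eq_zero_of_hasDerivAt {𝕜 : Type*} [NontriviallyNormedField 𝕜] [CompleteSpace 𝕜]
    {f : 𝕜 × 𝕜 → 𝕜} {f' : 𝕜 × 𝕜 →L[𝕜] 𝕜} {a b c : 𝕜} (hf : HasStrictFDerivAt f f' (a, b))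
    (hzero : f (a, b) = 0) (hderiv : HasDerivAt (fun s => f (a, s)) c b) (hc : c ≠ 0) :
    ∃ᶠ p in 𝓝 (a, b), p.1 ≠ a ∧ f p = 0 := by
  have hpartial : f' (0, 1) = c :=
    (hf.hasFDerivAt.comp_hasDerivAt b ((hasDerivAt_const b a).prodMk (hasDerivAt_id b))).unique
      hderiv
  have hinv : (f' ∘L .inr 𝕜 𝕜 𝕜).IsInvertible :=
    ⟨ContinuousLinearEquiv.unitsEquivAut 𝕜 (Units.mk0 c hc), by ext; simp [hpartial]⟩
  let ψ := hf.implicitFunctionOfProdDomain hinv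
  have hgraph : Tendsto (fun x => (x, ψ x)) (𝓝[≠] a) (𝓝 (a, b)) :=
    (tendsto_id.prodMk_nhds (hf.tendsto_implicitFunctionOfProdDomain hinv)).mono_left
      nhdsWithin_le_nhds
  have hroot : ∀ᶠ x in 𝓝[≠] a, f (x, ψ x) = 0 := by
    simpa only [hzero] using
      (hf.eventually_apply_implicitFunctionOfProdDomain hinv).filter_mono nhdsWithin_le_nhds
  exact hgraph.frequently (eventually_mem_nhdsWithin.and hroot).frequently

lemma eventually_div_add_ne_zero {𝕜 κ : Type*} [NormedField 𝕜] [Finite κ] {α : κ → 𝕜}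
    (hα : ∀ j, α j ≠ 0) (s : 𝕜) :
    ∀ᶠ p : 𝕜 × 𝕜 in 𝓝 (0, s), p.1 ≠ 0 → ∀ j, α j / p.1 + p.2 ≠ 0 := by
  have hnum : ∀ᶠ p : 𝕜 × 𝕜 in 𝓝 (0, s), ∀ j, α j + p.2 * p.1 ≠ 0 :=
    eventually_all.2 fun j => ContinuousAt.eventually_ne (by fun_prop) (by simp [hα])
  filter_upwards [hnum] with p hp hp0 j
  rw [div_add' _ _ _ hp0]
  exact div_ne_zero (hp j) hp0

end TopologicalField

lemma det_eq_prod_diag_of_row {ι R : Type*} [Fintype ι] [DecidableEq ι] [CommRing R]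
    {M : Matrix ι ι R} (o : ι) (hM : ∀ n ≠ o, ∀ m ≠ n, M n m = 0) : M.det = ∏ n, M n n := by
  have hblock : M.toSquareBlockProp (· ≠ o) = .diagonal fun n => M n n := by
    ext n m
    obtain rfl | hnm := eq_or_ne n m
    · simp [Matrix.toSquareBlockProp_def]
    · simpa [Matrix.toSquareBlockProp_def, hnm]
        using hM n n.2 m fun h => hnm (Subtype.ext h.symm)
  have hpivot : (M.toSquareBlockProp (· = o)).det = M o o :=
    Matrix.det_eq_elem_of_subsingleton _ (⟨o, rfl⟩ : {n // n = o})
  calc M.det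
      = (M.toSquareBlockProp (· = o)).det * (M.toSquareBlockProp (· ≠ o)).det := by
        convert M.twoBlockTriangular_det (· = o)
          (by rintro n hn _ rfl; exact hM n hn _ (Ne.symm hn))
    _ = M o o * ∏ n : {n // n ≠ o}, M n n := by rw [hpivot, hblock, Matrix.det_diagonal]
    _ = ∏ n, M n n := (Fintype.prod_eq_mul_prod_subtype_ne (fun n => M n n) o).symm

lemma univ_gcd_eq_one_of_pairwise_coprime {ι : Type*} [Fintype ι] [Nontrivial ι] {q : ι → ℕ}
    (hq : Pairwise (Function.onFun Nat.Coprime q)) : Finset.univ.gcd q = 1 := by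
  obtain ⟨i, j, hij⟩ := exists_pair_ne ι
  exact Nat.eq_one_of_dvd_coprimes (hq hij) (Finset.gcd_dvd (Finset.mem_univ i))
    (Finset.gcd_dvd (Finset.mem_univ j))

section GenericDirection

variable {K ι κ : Type*} [Field K] [Infinite K] [Finite ι] [Fintype κ]

lemma exists_one_dotProduct_eq_zero_and_forall_dotProduct_ne_zero {w : ι → κ → K}
    (hw : ∀ a, ∃ i j, w a i ≠ w a j) :
    ∃ α : κ → K, 1 ⬝ᵥ α = 0 ∧ ∀ a, w a ⬝ᵥ α ≠ 0 := by
  classical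
  refine Module.Dual.exists_forall_mem_ne_zero_of_forall_exists
    (LinearMap.ker (dotProductBilin K K (1 : κ → K))) (fun a => dotProductBilin K K (w a))
    fun a => ?_
  obtain ⟨i, j, hij⟩ := hw a
  exact ⟨Pi.single i 1 - Pi.single j 1, by simp [dotProduct_sub],
    by simpa [dotProduct_sub, sub_eq_zero] using hij⟩

lemma exists_generic_direction [Nontrivial κ] {v : ι → κ → K} {o : ι}
    (hv : ∀ n ≠ o, ∃ i j, v n i ≠ v n j) :
    ∃ α : κ → K, 1 ⬝ᵥ α = 0 ∧ (∀ j, α j ≠ 0) ∧ ∀ n ≠ o, v n ⬝ᵥ α ≠ 0 := by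
  classical
  obtain ⟨α, hsum, hα⟩ := exists_one_dotProduct_eq_zero_and_forall_dotProduct_ne_zero
    (w := Sum.elim (fun i : κ => Pi.single i (1 : K)) fun n : {n // n ≠ o} => v n) (by
      rintro (i | n)
      · obtain ⟨j, hji⟩ := exists_ne i
        exact ⟨i, j, by simp [hji]⟩
      · exact hv n n.2)
  exact ⟨α, hsum, fun j => by simpa using hα (.inl j), fun n hn => hα (.inr ⟨n, hn⟩)⟩

end GenericDirection

section FermiVariety

open Matrix

variable {𝕜 ι κ : Type*} [Fintype κ]

section Field

variable [Field 𝕜]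

/-- The `n`-th diagonal entry of the Floquet matrix of the free Laplacian at `z`, for an arbitrary
family `v` of phases in place of `ρ`. -/
def freeSymbol (v : ι → κ → 𝕜) (z : κ → 𝕜) (n : ι) : 𝕜 :=
  ∑ j, (v n j * z j + (v n j * z j)⁻¹)

variable [DecidableEq ι]

/-- The weights of the row scaling: `ε` on every row except `o`, which is left alone. -/
def rowScale (o : ι) (ε : 𝕜) : ι → 𝕜 := Function.update (fun _ => ε) o 1

/-- The free symbol at `z = α / ε + s`, with rows scaled by `rowScale o ε`, as a function of
`p = (ε, s)`. It is written with the `1 / ε` terms cleared, which is correct on row `o` when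
`v o ⬝ᵥ α = 0`, so that it makes sense at `ε = 0`. -/
def rescaledSymbol (v : ι → κ → 𝕜) (o : ι) (α : κ → 𝕜) (p : 𝕜 × 𝕜) (n : ι) : 𝕜 :=
  v n ⬝ᵥ α + rowScale o p.1 n * ∑ j, (v n j * p.2 + p.1 / (v n j * (α j + p.1 * p.2)))

variable {v : ι → κ → 𝕜} {o : ι} {α : κ → 𝕜}

lemma rescaledSymbol_eq_mul_freeSymbol (hα : v o ⬝ᵥ α = 0) {p : 𝕜 × 𝕜} (hp : p.1 ≠ 0) (n : ι) :
    rescaledSymbol v o α p n = rowScale o p.1 n * freeSymbol v (fun j => α j / p.1 + p.2) n := by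
  have hlead : v n ⬝ᵥ α = rowScale o p.1 n * (v n ⬝ᵥ α / p.1) := by
    obtain rfl | hn := eq_or_ne n o
    · simp [hα]
    · simp [rowScale, hn, mul_div_cancel₀ _ hp]
  have hinv (j : κ) : (v n j * (α j / p.1 + p.2))⁻¹ = p.1 / (v n j * (α j + p.1 * p.2)) := by
    rw [div_add' _ _ _ hp, mul_comm p.2, ← mul_div_assoc, inv_div]
  rw [rescaledSymbol, hlead, ← mul_add, freeSymbol, dotProduct, Finset.sum_div,
    ← Finset.sum_add_distrib]
  refine congrArg _ (Finset.sum_congr rfl fun j _ => ?_)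
  rw [hinv, mul_div_assoc, mul_add (v n j) (α j / p.1), add_assoc]

variable [Fintype ι]

/-- The Fermi variety of the free operator perturbed by an arbitrary matrix `B`; for a potential
`V` at energy `lam`, `B` has entries `V̂(n - n') - lam δ_{n,n'}`. -/
def fermiVariety (v : ι → κ → 𝕜) (B : Matrix ι ι 𝕜) : Set (κ → 𝕜) :=
  {z | (∀ j, z j ≠ 0) ∧ (diagonal (freeSymbol v z) + B).det = 0}

/-- The determinant of the row-scaled Floquet matrix at `z = α / ε + s`, as a function of
`p = (ε, s)`. -/
def rescaledDet (v : ι → κ → 𝕜) (o : ι) (α : κ → 𝕜) (B : Matrix ι ι 𝕜) (p : 𝕜 × 𝕜) : 𝕜 :=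
  (diagonal (rescaledSymbol v o α p) + diagonal (rowScale o p.1) * B).det

lemma rescaledDet_eq_mul_det (hα : v o ⬝ᵥ α = 0) (B : Matrix ι ι 𝕜) {p : 𝕜 × 𝕜} (hp : p.1 ≠ 0) :
    rescaledDet v o α B p = (∏ n, rowScale o p.1 n) *
      (diagonal (freeSymbol v fun j => α j / p.1 + p.2) + B).det := by
  rw [rescaledDet, funext (rescaledSymbol_eq_mul_freeSymbol hα hp), ← diagonal_mul_diagonal,
    ← mul_add, det_mul, det_diagonal]

lemma rescaledDet_eq_zero_iff_mem_fermiVariety (hα : v o ⬝ᵥ α = 0) (B : Matrix ι ι 𝕜)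
    {p : 𝕜 × 𝕜} (hp : p.1 ≠ 0) (hz : ∀ j, α j / p.1 + p.2 ≠ 0) :
    rescaledDet v o α B p = 0 ↔ (fun j => α j / p.1 + p.2) ∈ fermiVariety v B := by
  have hscale : ∏ n, rowScale o p.1 n ≠ 0 :=
    Finset.prod_ne_zero_iff.2 fun n _ => by
      rw [rowScale, Function.update_apply]
      split_ifs <;> simp [hp]
  simp [rescaledDet_eq_mul_det hα B hp, hscale, fermiVariety, hz]

lemma rescaledDet_zero (hα : v o ⬝ᵥ α = 0) (B : Matrix ι ι 𝕜) (s : 𝕜) :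
    rescaledDet v o α B (0, s) =
      ((∑ j, v o j) * s + B o o) * ∏ n ∈ Finset.univ.erase o, v n ⬝ᵥ α := by
  rw [rescaledDet, det_eq_prod_diag_of_row o, ← Finset.mul_prod_erase _ _ (Finset.mem_univ o)]
  · congr 1
    · simp [rescaledSymbol, rowScale, hα, Finset.sum_mul]
    · refine Finset.prod_congr rfl fun n hn => ?_
      simp [rescaledSymbol, rowScale, Finset.ne_of_mem_erase hn]
  · intro n hn m hm
    simp [rowScale, hn, hm.symm]

end Field

section Analysis

variable [NontriviallyNormedField 𝕜] [Fintype ι] [DecidableEq ι] {v : ι → κ → 𝕜} {o : ι}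
  {α : κ → 𝕜}

lemma analyticAt_rescaledDet (hv : ∀ n j, v n j ≠ 0) (hα : ∀ j, α j ≠ 0) (B : Matrix ι ι 𝕜)
    (s : 𝕜) : AnalyticAt 𝕜 (rescaledDet v o α B) (0, s) := by
  have hscale (n : ι) : AnalyticAt 𝕜 (fun p : 𝕜 × 𝕜 => rowScale o p.1 n) (0, s) := by
    simp only [rowScale, Function.update_apply]
    split_ifs <;> [exact analyticAt_const; exact analyticAt_fst]
  have hsymbol (n : ι) : AnalyticAt 𝕜 (fun p => rescaledSymbol v o α p n) (0, s) := by
    refine analyticAt_const.add ((hscale n).mul (Finset.analyticAt_fun_sum _ fun j _ => ?_))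
    exact (analyticAt_const.mul analyticAt_snd).add (analyticAt_fst.div (analyticAt_const.mul
      (analyticAt_const.add (analyticAt_fst.mul analyticAt_snd))) (by simp [hv, hα]))
  have hentry (n m : ι) : AnalyticAt 𝕜 (fun p =>
      (diagonal (rescaledSymbol v o α p) + diagonal (rowScale o p.1) * B) n m) (0, s) := by
    simp only [Matrix.add_apply, diagonal_apply, diagonal_mul]
    split_ifs
    · exact (hsymbol n).add ((hscale n).mul analyticAt_const)
    · exact analyticAt_const.add ((hscale n).mul analyticAt_const)
  unfold rescaledDet
  simp only [det_apply']
  exact Finset.analyticAt_fun_sum _ fun σ _ =>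
    analyticAt_const.mul (Finset.analyticAt_fun_prod _ fun n _ => hentry (σ n) n)

open Filter Topology

variable [CompleteSpace 𝕜]

lemma frequently_rescaledDet_eq_zero (hv : ∀ n j, v n j ≠ 0) (hvo : ∑ j, v o j ≠ 0)
    (hαo : v o ⬝ᵥ α = 0) (hα : ∀ j, α j ≠ 0) (hαv : ∀ n ≠ o, v n ⬝ᵥ α ≠ 0)
    {B : Matrix ι ι 𝕜} {s : 𝕜} (hs : (∑ j, v o j) * s + B o o = 0) :
    ∃ᶠ p in 𝓝 (0, s), p.1 ≠ 0 ∧ rescaledDet v o α B p = 0 := by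
  have hprod : ∏ n ∈ Finset.univ.erase o, v n ⬝ᵥ α ≠ 0 :=
    Finset.prod_ne_zero_iff.2 fun n hn => hαv n (Finset.ne_of_mem_erase hn)
  refine frequently_eq_zero_of_hasDerivAt (analyticAt_rescaledDet hv hα B s).hasStrictFDerivAt
    (by simp [rescaledDet_zero hαo, hs]) ?_ (mul_ne_zero hvo hprod)
  simp only [rescaledDet_zero hαo]
  simpa using (((hasDerivAt_id s).const_mul _).add_const _).mul_const _

theorem apply_self_eq_of_fermiVariety_subset [CharZero 𝕜] [Nontrivial κ]
    (hv : ∀ n j, v n j ≠ 0) (hvo : v o = 1) (hvn : ∀ n ≠ o, ∃ i j, v n i ≠ v n j)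
    {A B : Matrix ι ι 𝕜} (hAB : fermiVariety v A ⊆ fermiVariety v B) : A o o = B o o := by
  obtain ⟨α, hsum, hα, hαv⟩ := exists_generic_direction hvn
  have hαo : v o ⬝ᵥ α = 0 := by rw [hvo, hsum]
  have hvo' : ∑ j, v o j ≠ 0 := by simp [hvo]
  let s := -A o o / ∑ j, v o j
  have hs : (∑ j, v o j) * s = -A o o := mul_div_cancel₀ _ hvo'
  have hA := frequently_rescaledDet_eq_zero hv hvo' hαo hα hαv (B := A) (s := s) (by simp [hs])
  have hB : ∃ᶠ p in 𝓝 (0, s), rescaledDet v o α B p = 0 :=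
    (hA.and_eventually (eventually_div_add_ne_zero hα s)).mono fun p ⟨⟨hp, hpA⟩, hz⟩ =>
      (rescaledDet_eq_zero_iff_mem_fermiVariety hαo B hp (hz hp)).2
        (hAB ((rescaledDet_eq_zero_iff_mem_fermiVariety hαo A hp (hz hp)).1 hpA))
  have hlimit : rescaledDet v o α B (0, s) = 0 :=
    isClosed_singleton.mem_of_frequently_of_tendsto hB
      (analyticAt_rescaledDet hv hα B s).continuousAt
  rw [rescaledDet_zero hαo, hs, mul_eq_zero, Finset.prod_eq_zero_iff] at hlimit
  obtain hroot | ⟨n, hn, hzero⟩ := hlimit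
  · exact neg_add_eq_zero.1 hroot
  · exact absurd hzero (hαv n (Finset.ne_of_mem_erase hn))

end Analysis

end FermiVariety

section Floquet

variable {d : ℕ} {q : Fin d → ℕ}

/-- The phases `ρ^j_{n_j}` indexed by the cell, as the family `v` of `freeSymbol`. -/
def cellPhase (q : Fin d → ℕ) (n : Cell d q) (j : Fin d) : ℂ := rho d q j (n j : ℕ)

/-- The Floquet matrix of the multiplication operator by `V`, with entries `V̂(n - n')`. -/
def potentialMatrix (q : Fin d → ℕ) (V : (Fin d → ℤ) → ℝ) : Matrix (Cell d q) (Cell d q) ℂ :=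
  .of fun n n' => dft d q V fun j => ((n j : ℕ) : ℤ) - ((n' j : ℕ) : ℤ)

lemma fermiVariety_potentialMatrix (V : (Fin d → ℤ) → ℝ) (lam : ℂ) :
    fermiVariety (cellPhase q) (potentialMatrix q V - lam • 1) =
      {z | (∀ j, z j ≠ 0) ∧ floquetDet d q V z lam = 0} := by
  have hmatrix (z : Fin d → ℂ) :
      floquetMatrix d q V z = .diagonal (freeSymbol (cellPhase q) z) + potentialMatrix q V := by
    ext n n'
    simp [floquetMatrix, potentialMatrix, freeSymbol, cellPhase, Matrix.diagonal_apply]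
  simp only [fermiVariety, floquetDet, hmatrix, add_sub_assoc]

lemma potentialMatrix_apply_self (V : (Fin d → ℤ) → ℝ) (n : Cell d q) :
    potentialMatrix q V n n = potentialAvg d q V := by
  simp [potentialMatrix, dft, potentialAvg]

lemma cellPhase_eq_exp_pow (n : Cell d q) (j : Fin d) :
    cellPhase q n j = exp (2 * Real.pi * I / q j) ^ (n j : ℕ) := by
  rw [cellPhase, rho, ← exp_nat_mul]
  push_cast
  ring_nf

variable [∀ j, NeZero (q j)]

lemma cellPhase_pow_eq_one (n : Cell d q) (j : Fin d) : cellPhase q n j ^ q j = 1 := by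
  rw [cellPhase_eq_exp_pow, pow_right_comm,
    (isPrimitiveRoot_exp (q j) (NeZero.ne _)).pow_eq_one, one_pow]

lemma cellPhase_eq_one_iff {n : Cell d q} {j : Fin d} : cellPhase q n j = 1 ↔ n j = 0 := by
  rw [cellPhase_eq_exp_pow, (isPrimitiveRoot_exp (q j) (NeZero.ne _)).pow_eq_one_iff_dvd]
  exact ⟨fun h => Fin.ext (Nat.eq_zero_of_dvd_of_lt h (n j).2), fun h => by simp [h]⟩

lemma cellPhase_zero : cellPhase q 0 = 1 := funext fun j => by simp [cellPhase, rho]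

lemma exists_cellPhase_ne (hgcd : Finset.univ.gcd q = 1) {n : Cell d q} (hn : n ≠ 0) :
    ∃ i j, cellPhase q n i ≠ cellPhase q n j := by
  by_contra! hconst
  refine hn (funext fun i => cellPhase_eq_one_iff.1 (orderOf_eq_one_iff.1 ?_))
  refine Nat.dvd_one.1 (hgcd ▸ Finset.dvd_gcd fun j _ => orderOf_dvd_of_pow_eq_one ?_)
  rw [hconst i j, cellPhase_pow_eq_one]

theorem fermi_isospectral_avg_eq_general (hd : 2 ≤ d) (hgcd : Finset.univ.gcd q = 1)
    {A B : Matrix (Cell d q) (Cell d q) ℂ}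
    (hAB : fermiVariety (cellPhase q) A ⊆ fermiVariety (cellPhase q) B) : A 0 0 = B 0 0 := by
  have : Nontrivial (Fin d) := Fin.nontrivial_iff_two_le.2 hd
  exact apply_self_eq_of_fermiVariety_subset (fun n j => Complex.exp_ne_zero _)
    cellPhase_zero (fun n hn => exists_cellPhase_ne hgcd hn) hAB

end Floquet

/-- part of Theorem 4.1: Fermi isospectral potentials have the same
average over a periodicity cell. -/
theorem fermi_isospectral_avg_eq
    (d : ℕ) (hd : 2 ≤ d)
    (q : Fin d → ℕ) (hq : ∀ j, 0 < q j)
    (hco : ∀ i j : Fin d, i ≠ j → Nat.Coprime (q i) (q j))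
    (V Y : (Fin d → ℤ) → ℝ)
    (hVper : IsPeriodicPotential d q V) (hYper : IsPeriodicPotential d q Y)
    (hFermi : FermiIsospectral d q V Y) :
    potentialAvg d q V = potentialAvg d q Y := by
  have (j : Fin d) : NeZero (q j) := ⟨(hq j).ne'⟩
  have : Nontrivial (Fin d) := Fin.nontrivial_iff_two_le.2 hd
  obtain ⟨lam, h⟩ := hFermi
  simp only [← fermiVariety_potentialMatrix] at h
  simpa [potentialMatrix_apply_self] using fermi_isospectral_avg_eq_general hd
    (univ_gcd_eq_one_of_pairwise_coprime fun i j => hco i j) h.subset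

end
end
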